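/- arXiv:1810.02846 — 2 statements merged into one kernel-verified Lean document; each statement's English description precedes it below -/
import Mathlib

section
/- For every T = (𝐛,𝐫,𝐬) ∈ Tri^B_0(n,d) and every (T¹,T²) ∈ Spl(T), the integer [T¹]^!_𝔠·[T²]^!_𝔠 divides [T]^!_𝔠, and ∇(η_T) = Σ_{(T¹,T²) ∈ Spl(T)} (−1)^{⟨σ^T_{T¹,T²};𝐛⟩} ([T]^!_𝔠 / ([T¹]^!_𝔠·[T²]^!_𝔠)) η_{T¹} ⊗ η_{T²}. In particular, ∇(T^A_𝔞(n,d)) ⊆ ⊕_{l=0}^d T^A_𝔞(n,l) ⊗ T^A_𝔞(n,d−l), so T^A_𝔞(n) := ⊕_{d≥0} T^A_𝔞(n,d) is a sub-supercoalgebra of ⊕_{d≥0} M_n(A)^{⊗d}. -/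
open Finset

open scoped Classical TensorProduct

noncomputable section

namespace GS

/-- A *good pair* `(A, 𝔞)`: a `𝕜`-superalgebra `A = ev ⊕ od` which is free as a
`𝕜`-supermodule, together with a subalgebra `𝔞 = aa ⊆ A₀` such that `𝔞` and `A/𝔞` are free,
a complement `𝔠 = cc` of `𝔞` in `A₀`, and an `(A,𝔞)`-basis `B = B_𝔞 ⊔ B_𝔠 ⊔ B_1`
(encoded by `bas : Basis β 𝕜 A` with the partition `part : β → Fin 3`,
where `0` = `B_𝔞`, `1` = `B_𝔠`, `2` = `B_1`). -/
structure GoodPair (𝕜 A β : Type) [CommRing 𝕜] [NonUnitalRing A] [Module 𝕜 A] : Type where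
  ev : Submodule 𝕜 A
  od : Submodule 𝕜 A
  compl : IsCompl ev od
  mul_ee : ∀ a ∈ ev, ∀ b ∈ ev, a * b ∈ ev
  mul_eo : ∀ a ∈ ev, ∀ b ∈ od, a * b ∈ od
  mul_oe : ∀ a ∈ od, ∀ b ∈ ev, a * b ∈ od
  mul_oo : ∀ a ∈ od, ∀ b ∈ od, a * b ∈ ev
  free_ev : Module.Free 𝕜 ev
  free_od : Module.Free 𝕜 od
  aa : Submodule 𝕜 A
  aa_le_ev : aa ≤ ev
  aa_mul : ∀ a ∈ aa, ∀ b ∈ aa, a * b ∈ aa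
  free_aa : Module.Free 𝕜 aa
  free_quot : Module.Free 𝕜 (A ⧸ aa)
  cc : Submodule 𝕜 A
  aa_inf_cc : aa ⊓ cc = ⊥
  aa_sup_cc : aa ⊔ cc = ev
  bas : Module.Basis β 𝕜 A
  part : β → Fin 3
  bas_mem_aa : ∀ i, part i = 0 → bas i ∈ aa
  bas_mem_cc : ∀ i, part i = 1 → bas i ∈ cc
  bas_mem_od : ∀ i, part i = 2 → bas i ∈ od

variable {𝕜 A β : Type} [CommRing 𝕜] [NonUnitalRing A] [Module 𝕜 A]

/-- An element is homogeneous if it lies in the even or the odd part. -/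
def Homog (P : GoodPair 𝕜 A β) (a : A) : Prop := a ∈ P.ev ∨ a ∈ P.od

/-- `H`, the set of nonzero homogeneous elements of `A`. -/
def Hset (P : GoodPair 𝕜 A β) : Set A := {a | Homog P a ∧ a ≠ 0}

/-- `⟨𝐚,𝐜⟩ = #{(k,l) : k > l, a_k odd, c_l odd}` (the Koszul sign count). -/
def koz (od : Submodule 𝕜 A) {d : ℕ} (a c : Fin d → A) : ℕ :=
  (univ.filter fun kl : Fin d × Fin d => kl.2 < kl.1 ∧ a kl.1 ∈ od ∧ c kl.2 ∈ od).card

/-- `⟨σ;𝐚⟩ = #{(k,l) : k < l, σ⁻¹k > σ⁻¹l, a_k and a_l odd}`. -/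
def sgnc (od : Submodule 𝕜 A) {d : ℕ} (σ : Equiv.Perm (Fin d)) (a : Fin d → A) : ℕ :=
  (univ.filter fun kl : Fin d × Fin d =>
    kl.1 < kl.2 ∧ σ⁻¹ kl.2 < σ⁻¹ kl.1 ∧ a kl.1 ∈ od ∧ a kl.2 ∈ od).card

/-- `⟨𝐚,𝐫,𝐬⟩ = #{(k,l) : k < l, a_k, a_l odd, (a_k,r_k,s_k) > (a_l,r_l,s_l)}` with respect to
the fixed total order `ord` on `A × [1,n] × [1,n]`. -/
def ang {n : ℕ} (od : Submodule 𝕜 A) (ord : LinearOrder (A × Fin n × Fin n))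
    {d : ℕ} (a : Fin d → A) (r s : Fin d → Fin n) : ℕ :=
  (univ.filter fun kl : Fin d × Fin d =>
    kl.1 < kl.2 ∧ a kl.1 ∈ od ∧ a kl.2 ∈ od ∧
      ord.lt (a kl.2, r kl.2, s kl.2) (a kl.1, r kl.1, s kl.1)).card

/-- `(𝐚,𝐫,𝐬) ∈ Tri^H(n,d)`: all entries are nonzero homogeneous, and a repeated entry
triple forces evenness. -/
def IsTriH (P : GoodPair 𝕜 A β) {n d : ℕ} (a : Fin d → A) (r s : Fin d → Fin n) : Prop :=
  (∀ k, a k ∈ Hset P) ∧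
    ∀ k l : Fin d, k ≠ l → (a k, r k, s k) = (a l, r l, s l) → a k ∈ P.ev

/-- `(𝐛,𝐫,𝐬) ∈ Tri^B(n,d)` for words of basis elements. -/
def IsTriB (P : GoodPair 𝕜 A β) {n d : ℕ} (b : Fin d → β) (r s : Fin d → Fin n) : Prop :=
  ∀ k l : Fin d, k ≠ l → ((b k, r k, s k) : β × Fin n × Fin n) = (b l, r l, s l) →
    P.part (b k) ≠ 2

/-- Minimal length representatives of the cosets `(S_e × S_f)\S_{e+f}`. -/
def IsShuffle (e f : ℕ) (σ : Equiv.Perm (Fin (e + f))) : Prop :=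
  (∀ k l : Fin (e + f), k < l → (l : ℕ) < e → σ⁻¹ k < σ⁻¹ l) ∧
  (∀ k l : Fin (e + f), k < l → e ≤ (k : ℕ) → σ⁻¹ k < σ⁻¹ l)

/-- The tower of superalgebras `M_n(A)^{⊗d}`, `d ≥ 0`, axiomatised.  `X a r s` is the pure
tensor `ξ^{a_1}_{r_1,s_1} ⊗ ⋯ ⊗ ξ^{a_d}_{r_d,s_d}` of matrix units; it is multilinear in the
`A`-entries, the pure tensors of basis elements form a basis, multiplication is the sign-twisted
(Koszul) componentwise one, `act` is the right action of the symmetric groups by superalgebra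
automorphisms, `evT/odT` is the induced supermodule structure, `star` is the `*`-(shuffle)
product and `nab` gives the components of the deconcatenation coproduct `∇`. -/
structure Tower (𝕜 A β : Type) [CommRing 𝕜] [NonUnitalRing A] [Module 𝕜 A]
    (n : ℕ) (T : ℕ → Type) [∀ e, NonUnitalRing (T e)] [∀ e, Module 𝕜 (T e)]
    (P : GoodPair 𝕜 A β) : Type where
  X : ∀ {e : ℕ}, (Fin e → A) → (Fin e → Fin n) → (Fin e → Fin n) → T e
  X_update_add : ∀ {e : ℕ} (a : Fin e → A) (r s : Fin e → Fin n) (k : Fin e) (x y : A),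
    X (Function.update a k (x + y)) r s
      = X (Function.update a k x) r s + X (Function.update a k y) r s
  X_update_smul : ∀ {e : ℕ} (a : Fin e → A) (r s : Fin e → Fin n) (k : Fin e) (c : 𝕜) (x : A),
    X (Function.update a k (c • x)) r s = c • X (Function.update a k x) r s
  bas : ∀ e : ℕ, Module.Basis ((Fin e → β) × (Fin e → Fin n) × (Fin e → Fin n)) 𝕜 (T e)
  bas_eq : ∀ (e : ℕ) (b : Fin e → β) (r s : Fin e → Fin n),
    bas e (b, r, s) = X (fun k => P.bas (b k)) r s
  X_mul : ∀ {e : ℕ} (a c : Fin e → A) (r s t u : Fin e → Fin n),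
    (∀ k, Homog P (a k)) → (∀ k, Homog P (c k)) →
    X a r s * X c t u
      = if s = t then ((-1 : ℤ) ^ koz P.od a c) • X (fun k => a k * c k) r u else 0
  act : ∀ {e : ℕ}, Equiv.Perm (Fin e) → T e →ₗ[𝕜] T e
  act_act : ∀ {e : ℕ} (σ τ : Equiv.Perm (Fin e)) (x : T e), act τ (act σ x) = act (σ * τ) x
  act_mul : ∀ {e : ℕ} (σ : Equiv.Perm (Fin e)) (x y : T e), act σ (x * y) = act σ x * act σ y
  act_X : ∀ {e : ℕ} (σ : Equiv.Perm (Fin e)) (a : Fin e → A) (r s : Fin e → Fin n),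
    (∀ k, Homog P (a k)) →
    act σ (X a r s) = ((-1 : ℤ) ^ sgnc P.od σ a) • X (a ∘ σ) (r ∘ σ) (s ∘ σ)
  evT : ∀ e : ℕ, Submodule 𝕜 (T e)
  odT : ∀ e : ℕ, Submodule 𝕜 (T e)
  complT : ∀ e : ℕ, IsCompl (evT e) (odT e)
  X_mem_evT : ∀ {e : ℕ} (a : Fin e → A) (r s : Fin e → Fin n), (∀ k, Homog P (a k)) →
    Even (univ.filter fun k => a k ∈ P.od).card → X a r s ∈ evT e
  X_mem_odT : ∀ {e : ℕ} (a : Fin e → A) (r s : Fin e → Fin n), (∀ k, Homog P (a k)) →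
    ¬ Even (univ.filter fun k => a k ∈ P.od).card → X a r s ∈ odT e
  star : ∀ {e f : ℕ}, T e →ₗ[𝕜] T f →ₗ[𝕜] T (e + f)
  star_X : ∀ {e f : ℕ} (a : Fin e → A) (r s : Fin e → Fin n)
      (c : Fin f → A) (t u : Fin f → Fin n),
    star (X a r s) (X c t u)
      = ∑ σ ∈ univ.filter (IsShuffle e f),
          act σ (X (Fin.append a c) (Fin.append r t) (Fin.append s u))
  nab : ∀ e f : ℕ, T (e + f) →ₗ[𝕜] TensorProduct 𝕜 (T e) (T f)
  nab_X : ∀ (e f : ℕ) (a : Fin (e + f) → A) (r s : Fin (e + f) → Fin n),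
    nab e f (X a r s)
      = (X (a ∘ Fin.castAdd f) (r ∘ Fin.castAdd f) (s ∘ Fin.castAdd f))
          ⊗ₜ[𝕜] (X (a ∘ Fin.natAdd e) (r ∘ Fin.natAdd e) (s ∘ Fin.natAdd e))

variable {n : ℕ} {T : ℕ → Type} [∀ e, NonUnitalRing (T e)] [∀ e, Module 𝕜 (T e)]

/-- `ξ^𝐚_{𝐫,𝐬}`, the signed sum of the pure tensors over the `S_d`-orbit of `(𝐚,𝐫,𝐬)`. -/
def xiH {P : GoodPair 𝕜 A β} (D : Tower 𝕜 A β n T P) (ord : LinearOrder (A × Fin n × Fin n))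
    {d : ℕ} (a : Fin d → A) (r s : Fin d → Fin n) : T d :=
  ∑ w ∈ (univ.image fun σ : Equiv.Perm (Fin d) => (a ∘ σ, r ∘ σ, s ∘ σ)),
    ((-1 : ℤ) ^ (ang P.od ord a r s + ang P.od ord w.1 w.2.1 w.2.2)) • D.X w.1 w.2.1 w.2.2

/-- `ξ^𝐛_{𝐫,𝐬}` for a word `𝐛` of basis elements. -/
def xiB {P : GoodPair 𝕜 A β} (D : Tower 𝕜 A β n T P) (ord : LinearOrder (A × Fin n × Fin n))
    {d : ℕ} (b : Fin d → β) (r s : Fin d → Fin n) : T d :=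
  xiH D ord (fun k => P.bas (b k)) r s

/-- `[𝐛,𝐫,𝐬]^b_{r,s}`, the multiplicity of an entry triple in a word triple. -/
def mco {n d : ℕ} (b : Fin d → β) (r s : Fin d → Fin n) (w : β × Fin n × Fin n) : ℕ :=
  (univ.filter fun k => ((b k, r k, s k) : β × Fin n × Fin n) = w).card

/-- `∏ ([𝐛,𝐫,𝐬]^b_{r,s})!` over the entry triples whose basis element satisfies `sel`
(e.g. `sel i = (part i = 1)` gives `[𝐛,𝐫,𝐬]^!_𝔠`). -/
def facSel (sel : β → Prop) {n d : ℕ} (b : Fin d → β) (r s : Fin d → Fin n) : ℕ :=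
  ∏ w ∈ ((univ.image fun k => ((b k, r k, s k) : β × Fin n × Fin n)).filter fun w => sel w.1),
    Nat.factorial (mco b r s w)

/-- `η^𝐛_{𝐫,𝐬} := [𝐛,𝐫,𝐬]^!_𝔠 • ξ^𝐛_{𝐫,𝐬}`. -/
def eta {P : GoodPair 𝕜 A β} (D : Tower 𝕜 A β n T P) (ord : LinearOrder (A × Fin n × Fin n))
    {d : ℕ} (b : Fin d → β) (r s : Fin d → Fin n) : T d :=
  facSel (fun i => P.part i = 1) b r s • xiB D ord b r s

/-- `S^A(n,d) = (M_n(A)^{⊗d})^{S_d}`, the invariants. -/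
def SchurS {P : GoodPair 𝕜 A β} (D : Tower 𝕜 A β n T P) (d : ℕ) : Submodule 𝕜 (T d) where
  carrier := {x | ∀ σ : Equiv.Perm (Fin d), D.act σ x = x}
  add_mem' := by
    intro x y hx hy σ
    rw [map_add, hx σ, hy σ]
  zero_mem' := by
    intro σ; exact map_zero _
  smul_mem' := by
    intro c x hx σ
    rw [map_smul, hx σ]

/-- The generalized Schur algebra `T^A_𝔞(n,d)`, the `𝕜`-span of the `η^𝐛_{𝐫,𝐬}`,
`(𝐛,𝐫,𝐬) ∈ Tri^B(n,d)`. -/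
def SchurT {P : GoodPair 𝕜 A β} (D : Tower 𝕜 A β n T P) (ord : LinearOrder (A × Fin n × Fin n))
    (d : ℕ) : Submodule 𝕜 (T d) :=
  Submodule.span 𝕜 {x | ∃ b r s, IsTriB P b r s ∧ x = eta D ord b r s}

/-- `S^𝔞(n,d) = (M_n(𝔞)^{⊗d})^{S_d} ⊆ S^A(n,d)`. -/
def SchurA {P : GoodPair 𝕜 A β} (D : Tower 𝕜 A β n T P) (d : ℕ) : Submodule 𝕜 (T d) :=
  Submodule.span 𝕜 {x | ∃ a r s, (∀ k, a k ∈ P.aa) ∧ x = D.X a r s} ⊓ SchurS D d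

/-- `ξ^f = E^f ⊗ ⋯ ⊗ E^f` for `f ∈ A`. -/
def xiIdem {P : GoodPair 𝕜 A β} (D : Tower 𝕜 A β n T P) (f : A) (d : ℕ) : T d :=
  ∑ r : Fin d → Fin n, D.X (fun _ => f) r r

/-- Transport along an equality of degrees. -/
def tcast {e f : ℕ} (h : e = f) : T e ≃ₗ[𝕜] T f := by
  subst h; exact LinearEquiv.refl 𝕜 (T e)

/-- Iterated `*`-product `x_1 * x_2 * ⋯ * x_d` of degree-one pure tensors read off from a
word (associated to the left). -/
def starIter {P : GoodPair 𝕜 A β} (D : Tower 𝕜 A β n T P) :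
    ∀ (e : ℕ), (Fin e → A) → (Fin e → Fin n) → (Fin e → Fin n) → T e
  | 0, _, _, _ => D.X Fin.elim0 Fin.elim0 Fin.elim0
  | (e + 1), a, r, s =>
      D.star (starIter D e (a ∘ Fin.castSucc) (r ∘ Fin.castSucc) (s ∘ Fin.castSucc))
        (D.X (fun _ : Fin 1 => a (Fin.last e)) (fun _ => r (Fin.last e)) (fun _ => s (Fin.last e)))

/-- Iterated `*`-product of blockwise given elements. -/
def starBlocks {P : GoodPair 𝕜 A β} (D : Tower 𝕜 A β n T P) :
    ∀ (q : ℕ) (sz : Fin q → ℕ), (∀ m, T (sz m)) → T (∑ m, sz m)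
  | 0, sz, _ => cast (congrArg T (Fin.sum_univ_zero sz).symm) (D.X Fin.elim0 Fin.elim0 Fin.elim0)
  | (q + 1), sz, x =>
      cast (congrArg T (Fin.sum_univ_castSucc sz).symm)
        (D.star (starBlocks D q (fun m => sz m.castSucc) (fun m => x m.castSucc))
          (x (Fin.last q)))

/-- Concatenation of a tuple of words of lengths `sz 0, …, sz (q-1)`. -/
def concatB {α : Type} : ∀ {q : ℕ} (sz : Fin q → ℕ), (∀ m, Fin (sz m) → α) → Fin (∑ m, sz m) → α
  | 0, sz, _ => fun k => Fin.elim0 (cast (congrArg Fin (Fin.sum_univ_zero sz)) k)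
  | (q + 1), sz, f => fun k =>
      Fin.append (concatB (fun m => sz m.castSucc) (fun m => f m.castSucc)) (f (Fin.last q))
        (cast (congrArg Fin (Fin.sum_univ_castSucc sz)) k)

/-- A triple of words `(𝐛,𝐫,𝐬)`. -/
abbrev WordTriple (β : Type) (n d : ℕ) : Type :=
  (Fin d → β) × (Fin d → Fin n) × (Fin d → Fin n)

/-- The diagonal right place-permutation action on triples of words. -/
def wAct {d : ℕ} (w : WordTriple β n d) (σ : Equiv.Perm (Fin d)) : WordTriple β n d :=
  (w.1 ∘ σ, w.2.1 ∘ σ, w.2.2 ∘ σ)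

/-- The `k`-th entry triple `(b_k, r_k, s_k)` (with `b_k` realized in `A`). -/
def entryAt (P : GoodPair 𝕜 A β) {n d : ℕ} (w : WordTriple β n d) (k : Fin d) :
    A × Fin n × Fin n :=
  (P.bas (w.1 k), w.2.1 k, w.2.2 k)

/-- The lexicographic order on triples of words induced by the total order `ord`. -/
def wordLE (P : GoodPair 𝕜 A β) {n : ℕ} (ord : LinearOrder (A × Fin n × Fin n)) {d : ℕ}
    (w w' : WordTriple β n d) : Prop :=
  (∀ k, entryAt P w k = entryAt P w' k) ∨
    ∃ l : Fin d, (∀ k, k < l → entryAt P w k = entryAt P w' k) ∧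
      ord.lt (entryAt P w l) (entryAt P w' l)

/-- `Tri^B_0(n,d)`: the lexicographically minimal representatives of the `S_d`-orbits on
`Tri^B(n,d)`. -/
def IsTri0 (P : GoodPair 𝕜 A β) {n : ℕ} (ord : LinearOrder (A × Fin n × Fin n)) {d : ℕ}
    (w : WordTriple β n d) : Prop :=
  IsTriB P w.1 w.2.1 w.2.2 ∧ ∀ σ : Equiv.Perm (Fin d), wordLE P ord w (wAct w σ)

/-- The first `l` letters of each word. -/
def firstW {d : ℕ} (l : ℕ) (hl : l ≤ d) (w : WordTriple β n d) : WordTriple β n l :=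
  (fun k => w.1 ⟨k, lt_of_lt_of_le k.isLt hl⟩,
   fun k => w.2.1 ⟨k, lt_of_lt_of_le k.isLt hl⟩,
   fun k => w.2.2 ⟨k, lt_of_lt_of_le k.isLt hl⟩)

/-- The last `d - l` letters of each word. -/
def lastW {d : ℕ} (l : ℕ) (hl : l ≤ d) (w : WordTriple β n d) : WordTriple β n (d - l) :=
  (fun k => w.1 ⟨l + (k : ℕ), by have := k.isLt; omega⟩,
   fun k => w.2.1 ⟨l + (k : ℕ), by have := k.isLt; omega⟩,
   fun k => w.2.2 ⟨l + (k : ℕ), by have := k.isLt; omega⟩)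

/-- Concatenation of words. -/
def appF {α : Type} {d : ℕ} (l : ℕ) (hl : l ≤ d) (f : Fin l → α) (g : Fin (d - l) → α) :
    Fin d → α :=
  fun k => if hk : (k : ℕ) < l then f ⟨k, hk⟩ else g ⟨(k : ℕ) - l, by have := k.isLt; omega⟩

/-- Concatenation `T¹T²` of two triples of words. -/
def concatW {d : ℕ} (l : ℕ) (hl : l ≤ d) (p : WordTriple β n l × WordTriple β n (d - l)) :
    WordTriple β n d :=
  (appF l hl p.1.1 p.2.1, appF l hl p.1.2.1 p.2.2.1, appF l hl p.1.2.2 p.2.2.2)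

/-- `Spl_l(T)`, the set of `l`-splits of `T ∈ Tri^B_0(n,d)`. -/
def splitsF (P : GoodPair 𝕜 A β) {n : ℕ} (ord : LinearOrder (A × Fin n × Fin n)) {d : ℕ}
    (l : ℕ) (hl : l ≤ d) (w : WordTriple β n d) :
    Finset (WordTriple β n l × WordTriple β n (d - l)) :=
  (univ.image fun σ : Equiv.Perm (Fin d) =>
      (firstW l hl (wAct w σ), lastW l hl (wAct w σ))).filter
    fun p => IsTri0 P ord p.1 ∧ IsTri0 P ord p.2

/-- The number of inversions (= Coxeter length) of a permutation. -/
def invCount {d : ℕ} (σ : Equiv.Perm (Fin d)) : ℕ :=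
  (univ.filter fun kl : Fin d × Fin d => kl.1 < kl.2 ∧ σ kl.2 < σ kl.1).card

/-- The submodule `{x | x·ε = x}` (for an idempotent `ε` this is `R·ε`). -/
def rfix (𝕜 : Type) {R : Type} [CommRing 𝕜] [NonUnitalRing R] [Module 𝕜 R]
    [IsScalarTower 𝕜 R R] (ε : R) : Submodule 𝕜 R where
  carrier := {x | x * ε = x}
  add_mem' := by
    intro x y hx hy
    simp only [Set.mem_setOf_eq] at *
    rw [add_mul, hx, hy]
  zero_mem' := by simp
  smul_mem' := by
    intro c x hx
    simp only [Set.mem_setOf_eq] at *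
    rw [smul_mul_assoc, hx]

/-- Right `εSε`-module endomorphism property for a map of `S·ε = M ⊓ rfix ε`,
where `S` is the (possibly non-unital) algebra realized as the submodule `M` of `R`. -/
def IsEquivar (𝕜 : Type) {R : Type} [CommRing 𝕜] [NonUnitalRing R] [Module 𝕜 R]
    [IsScalarTower 𝕜 R R] (M : Submodule 𝕜 R) (ε : R)
    (f : ↥(M ⊓ rfix 𝕜 ε) →ₗ[𝕜] ↥(M ⊓ rfix 𝕜 ε)) : Prop :=
  ∀ (x : ↥(M ⊓ rfix 𝕜 ε)) (c : R), c ∈ M → ε * c * ε = c →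
    ∀ h : (x : R) * c ∈ M ⊓ rfix 𝕜 ε,
      ((f ⟨(x : R) * c, h⟩ : ↥(M ⊓ rfix 𝕜 ε)) : R) = (f x : R) * c

/-- `ε` is a *double centralizer idempotent* for the algebra `M ⊆ R`: the left
multiplication map `λ : M → End_{εMε}(Mε)` is bijective. -/
def IsDCI (𝕜 : Type) {R : Type} [CommRing 𝕜] [NonUnitalRing R] [Module 𝕜 R]
    [IsScalarTower 𝕜 R R] (M : Submodule 𝕜 R) (ε : R) : Prop :=
  (∀ s ∈ M, ∀ s' ∈ M, (∀ x ∈ M ⊓ rfix 𝕜 ε, s * x = s' * x) → s = s') ∧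
  (∀ f : ↥(M ⊓ rfix 𝕜 ε) →ₗ[𝕜] ↥(M ⊓ rfix 𝕜 ε), IsEquivar 𝕜 M ε f →
    ∃ s ∈ M, ∀ x : ↥(M ⊓ rfix 𝕜 ε), (f x : R) = s * (x : R))

/-! Read a triple `T = (𝐛,𝐫,𝐬)` as a word of `d` letters, so that `ξ_T` is the signed sum of the
pure tensors of the rearrangements of this word, with sign given by the inversions between odd
letters. Applying `∇` cuts every rearrangement after `l` letters. Sorting both halves groups the
resulting pairs into blocks, one for each `(T¹,T²) ∈ Spl_l(T)`, and the block of `(T¹,T²)` consists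
of all pairs of a rearrangement of `T¹` and a rearrangement of `T²`. The number of odd inversions of
a concatenation is that of its two parts plus a cross term which depends only on their multisets of
letters, hence is constant on a block; so the block sums to `ξ_{T¹} ⊗ ξ_{T²}` times the sign of the
concatenation `T¹T²`. Since `T` is sorted and has no repeated odd letter, this sign is that of
`σ^T_{T¹,T²}` on the odd positions. Multiplicities of letters add up under concatenation, so the
quotients `[T]^!_𝔠 / ([T¹]^!_𝔠·[T²]^!_𝔠)` are products of binomial coefficients. -/

section Words

variable {E : Type*} {d l m : ℕ}

/-- The multiset of letters of a word; two words are in the same `S_d`-orbit exactly when their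
contents agree. -/
def content (u : Fin d → E) : Multiset E := univ.val.map u

lemma count_content [DecidableEq E] (u : Fin d → E) (e : E) :
    (content u).count e = #{k | u k = e} := by
  rw [content, Multiset.count_map, card_def, filter_val]
  simp only [eq_comm]

lemma content_comp_perm (w : Fin d → E) (σ : Equiv.Perm (Fin d)) :
    content (w ∘ σ) = content w := by
  ext e
  rw [count_content, count_content]
  exact card_equiv σ (by simp)

lemma content_eq_content_iff {u w : Fin d → E} :
    content u = content w ↔ ∃ σ : Equiv.Perm (Fin d), w ∘ σ = u := by
  refine ⟨fun h => ?_, fun ⟨σ, hσ⟩ => hσ ▸ content_comp_perm w σ⟩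
  have fiberEquiv (e : E) : Nonempty ({k // u k = e} ≃ {k // w k = e}) := by
    simpa only [← Fintype.card_eq, Fintype.card_subtype, count_content]
      using congrArg (Multiset.count e) h
  exact ⟨Equiv.ofFiberEquiv fun e => (fiberEquiv e).some, funext (Equiv.ofFiberEquiv_map _)⟩

lemma content_append (u : Fin l → E) (v : Fin m → E) :
    content (Fin.append u v) = content u + content v := by
  simp only [content, Fin.univ_val_map, List.ofFn_fin_append, Multiset.coe_add]

/-- The `S_d`-orbit of a word. -/
def rearrangements (w : Fin d → E) : Finset (Fin d → E) :=
  univ.image fun σ : Equiv.Perm (Fin d) => w ∘ σ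

lemma mem_rearrangements {u w : Fin d → E} : u ∈ rearrangements w ↔ content u = content w := by
  simp [rearrangements, content_eq_content_iff]

/-- Deconcatenation of words of length `l + m = d`; its inverse is concatenation. -/
def splitWord (h : l + m = d) : (Fin d → E) ≃ (Fin l → E) × (Fin m → E) :=
  ((finCongr h).symm.arrowCongr (Equiv.refl E)).trans (Fin.appendEquiv l m).symm

lemma content_splitWord_symm (h : l + m = d) (q : (Fin l → E) × (Fin m → E)) :
    content ((splitWord h).symm q) = content q.1 + content q.2 := by
  subst h
  exact content_append q.1 q.2

/-- The ways of cutting a rearrangement of `w` into words of lengths `l` and `m`. -/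
def splits (h : l + m = d) (w : Fin d → E) : Finset ((Fin l → E) × (Fin m → E)) :=
  (rearrangements w).map (splitWord h).toEmbedding

lemma mem_splits {h : l + m = d} {w : Fin d → E} {q : (Fin l → E) × (Fin m → E)} :
    q ∈ splits h w ↔ content q.1 + content q.2 = content w := by
  rw [splits, mem_map_equiv, mem_rearrangements, content_splitWord_symm]

end Words

section Factorials

variable {E : Type*} [DecidableEq E]

/-- The product of the factorials of the multiplicities of a multiset, the order of the stabilizer
of a word with that content. -/
def factorialProd (s : Multiset E) : ℕ := ∏ e ∈ s.toFinset, (s.count e).factorial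

lemma factorialProd_eq_prod {s : Multiset E} {S : Finset E} (hS : s.toFinset ⊆ S) :
    factorialProd s = ∏ e ∈ S, (s.count e).factorial := by
  refine prod_subset hS fun e _ he => ?_
  rw [Multiset.count_eq_zero_of_notMem (mt Multiset.mem_toFinset.mpr he), Nat.factorial_zero]

lemma factorialProd_mul_dvd (s t : Multiset E) :
    factorialProd s * factorialProd t ∣ factorialProd (s + t) := by
  have hs : s.toFinset ⊆ (s + t).toFinset :=
    Multiset.toFinset_subset.mpr (Multiset.subset_of_le (Multiset.le_add_right s t))
  have ht : t.toFinset ⊆ (s + t).toFinset :=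
    Multiset.toFinset_subset.mpr (Multiset.subset_of_le (Multiset.le_add_left t s))
  rw [factorialProd_eq_prod hs, factorialProd_eq_prod ht, ← prod_mul_distrib, factorialProd]
  refine prod_dvd_prod_of_dvd _ _ fun e _ => ?_
  rw [Multiset.count_add]
  exact Nat.factorial_mul_factorial_dvd_factorial_add _ _

end Factorials

section Inversions

variable {E : Type*} [LinearOrder E] (O : E → Prop) {d l m : ℕ}

/-- The number of inversions of a word between letters satisfying `O`, the odd letters. -/
def oddInversions (u : Fin d → E) : ℕ :=
  #{ij : Fin d × Fin d | ij.1 < ij.2 ∧ O (u ij.1) ∧ O (u ij.2) ∧ u ij.2 < u ij.1}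

/-- The number of odd inversions between a letter of `s` and a later letter of `t`. -/
def crossInversions (s t : Multiset E) : ℕ :=
  (s.map fun x => t.countP fun y => O x ∧ O y ∧ y < x).sum

lemma oddInversions_append (u : Fin l → E) (v : Fin m → E) :
    oddInversions O (Fin.append u v) =
      oddInversions O u + oddInversions O v + crossInversions O (content u) (content v) := by
  have castAdd_lt_natAdd (i : Fin l) (j : Fin m) : Fin.castAdd m i < Fin.natAdd l j := by
    simp only [Fin.lt_def, Fin.val_castAdd, Fin.val_natAdd]
    omega
  have not_natAdd_lt_castAdd (i : Fin l) (j : Fin m) : ¬ Fin.natAdd l j < Fin.castAdd m i :=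
    (castAdd_lt_natAdd i j).asymm
  have cross : crossInversions O (content u) (content v) =
      ∑ i, ∑ j, if O (u i) ∧ O (v j) ∧ v j < u i then 1 else 0 := by
    simp only [crossInversions, content, Multiset.map_map, Function.comp_def,
      Multiset.countP_map, ← card_filter]
    rfl
  simp only [cross, oddInversions, card_filter, ← univ_product_univ, sum_product,
    Fin.sum_univ_add, Fin.append_left, Fin.append_right, sum_add_distrib, castAdd_lt_natAdd,
    not_natAdd_lt_castAdd, (Fin.strictMono_castAdd m).lt_iff_lt,
    (Fin.strictMono_natAdd l).lt_iff_lt, true_and, false_and, if_false, sum_const_zero]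
  ring

lemma oddInversions_splitWord_symm (h : l + m = d) (q : (Fin l → E) × (Fin m → E)) :
    oddInversions O ((splitWord h).symm q) =
      oddInversions O q.1 + oddInversions O q.2 +
        crossInversions O (content q.1) (content q.2) := by
  subst h
  exact oddInversions_append O q.1 q.2

lemma oddInversions_eq_zero_of_monotone {w : Fin d → E} (hw : Monotone w) :
    oddInversions O w = 0 := by
  simp only [oddInversions, card_eq_zero, filter_eq_empty_iff]
  exact fun ij _ h => (hw h.1.le).not_gt h.2.2.2

end Inversions

section Sorting

variable {E : Type*} [LinearOrder E] {d l m : ℕ}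

lemma eq_of_content_eq_of_monotone {u w : Fin d → E} (hu : Monotone u) (hw : Monotone w)
    (h : content u = content w) : u = w := by
  obtain ⟨σ, rfl⟩ := content_eq_content_iff.mp h
  exact Tuple.unique_monotone (τ := 1) hu hw

lemma comp_sort_eq_iff {u p : Fin d → E} (hp : Monotone p) :
    u ∘ Tuple.sort u = p ↔ content u = content p := by
  refine ⟨fun h => h ▸ (content_comp_perm u _).symm, fun h => ?_⟩
  exact eq_of_content_eq_of_monotone (Tuple.monotone_sort u) hp ((content_comp_perm u _).trans h)

/-- The pairs of sorted words of lengths `l` and `m` whose concatenation rearranges `w`. -/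
def sortedSplits (h : l + m = d) (w : Fin d → E) : Finset ((Fin l → E) × (Fin m → E)) :=
  {p ∈ splits h w | Monotone p.1 ∧ Monotone p.2}

lemma sum_splits_eq_sum_sortedSplits {M : Type*} [AddCommMonoid M] (h : l + m = d) (w : Fin d → E)
    (f : (Fin l → E) × (Fin m → E) → M) :
    ∑ q ∈ splits h w, f q =
      ∑ p ∈ sortedSplits h w, ∑ q ∈ rearrangements p.1 ×ˢ rearrangements p.2, f q := by
  have sort_mem : ∀ q ∈ splits h w,
      (q.1 ∘ Tuple.sort q.1, q.2 ∘ Tuple.sort q.2) ∈ sortedSplits h w := fun q hq =>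
    mem_filter.mpr ⟨by simpa only [mem_splits, content_comp_perm] using hq,
      Tuple.monotone_sort _, Tuple.monotone_sort _⟩
  rw [← sum_fiberwise_of_maps_to sort_mem]
  refine sum_congr rfl fun p hp => sum_congr ?_ fun _ _ => rfl
  obtain ⟨hpw, hp₁, hp₂⟩ := mem_filter.mp hp
  ext q
  simp only [mem_filter, mem_product, mem_rearrangements, Prod.ext_iff, comp_sort_eq_iff hp₁,
    comp_sort_eq_iff hp₂, and_iff_right_iff_imp]
  rintro ⟨hq₁, hq₂⟩
  rwa [mem_splits, hq₁, hq₂, ← mem_splits (h := h)]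

lemma monotone_iff_forall_toLex_le {w : Fin d → E} :
    Monotone w ↔ ∀ σ : Equiv.Perm (Fin d), toLex w ≤ toLex (w ∘ σ) := by
  refine ⟨fun hw σ => ?_, fun h => ?_⟩
  · have sort_le (u : Fin d → E) : toLex (u ∘ Tuple.sort u) ≤ toLex u :=
      Tuple.bubble_sort_induction (P := fun v => toLex v ≤ toLex u) le_rfl
        fun _ _ _ hij hlt hle => (Pi.lex_desc hij.le hlt).le.trans hle
    simpa only [(comp_sort_eq_iff hw).mpr (content_comp_perm w σ)] using sort_le (w ∘ σ)
  · intro i j hij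
    by_contra! hlt
    exact (h (Equiv.swap i j)).not_gt (Pi.lex_desc hij hlt)

end Sorting

section OddWords

variable {E : Type*} [LinearOrder E] (O : E → Prop) {d : ℕ}

lemma oddInversions_comp_perm {w : Fin d → E} (hw : Monotone w)
    (hinj : Set.InjOn w {k | O (w k)}) (σ : Equiv.Perm (Fin d)) :
    oddInversions O (w ∘ σ) =
      #{kl : Fin d × Fin d | kl.1 < kl.2 ∧ σ⁻¹ kl.2 < σ⁻¹ kl.1 ∧ O (w kl.1) ∧ O (w kl.2)} := by
  refine card_equiv ((σ.prodCongr σ).trans (Equiv.prodComm _ _)) fun ⟨i, j⟩ => ?_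
  have lt_iff (hi : O (w (σ i))) (hj : O (w (σ j))) : w (σ j) < w (σ i) ↔ σ j < σ i :=
    ⟨hw.reflect_lt, fun h => (hw h.le).lt_of_ne fun heq => h.ne (hinj hj hi heq)⟩
  have inv_apply (k : Fin d) : σ⁻¹ (σ k) = k := σ.symm_apply_apply k
  simp only [mem_filter, mem_univ, true_and, Function.comp_apply, Equiv.trans_apply,
    Equiv.prodCongr_apply, Prod.map_apply, Equiv.prodComm_apply, Prod.swap_prod_mk, inv_apply]
  tauto

end OddWords

section OrbitSums

variable {E : Type*} [LinearOrder E] (O : E → Prop) {d l m : ℕ}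

/-- The signed sum `∑ (-1)^(⟨w⟩ + ⟨u⟩) X_u` over the rearrangements `u` of `w`, for a family `X`
indexed by words; with `X` the pure tensors this is `ξ_w`. -/
def orbitSum {M : Type*} [AddCommGroup M] (X : (Fin d → E) → M) (w : Fin d → E) : M :=
  ∑ u ∈ rearrangements w, (-1 : ℤ) ^ (oddInversions O w + oddInversions O u) • X u

lemma orbitSum_of_monotone {M : Type*} [AddCommGroup M] (X : (Fin d → E) → M) {p : Fin d → E}
    (hp : Monotone p) :
    orbitSum O X p = ∑ u ∈ rearrangements p, (-1 : ℤ) ^ oddInversions O u • X u := by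
  simp only [orbitSum, oddInversions_eq_zero_of_monotone O hp, zero_add]

lemma oddInversions_splitWord_symm_of_sorted (h : l + m = d) {p q : (Fin l → E) × (Fin m → E)}
    (hp₁ : Monotone p.1) (hp₂ : Monotone p.2) (h₁ : content q.1 = content p.1)
    (h₂ : content q.2 = content p.2) :
    oddInversions O ((splitWord h).symm q) =
      oddInversions O ((splitWord h).symm p) + (oddInversions O q.1 + oddInversions O q.2) := by
  rw [oddInversions_splitWord_symm, oddInversions_splitWord_symm,
    oddInversions_eq_zero_of_monotone O hp₁, oddInversions_eq_zero_of_monotone O hp₂, h₁, h₂]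
  ring

variable {R M M₁ M₂ : Type*} [CommRing R] [AddCommGroup M] [Module R M] [AddCommGroup M₁]
  [Module R M₁] [AddCommGroup M₂] [Module R M₂]

lemma sum_rearrangements_product_of_sorted (h : l + m = d) (X₁ : (Fin l → E) → M₁)
    (X₂ : (Fin m → E) → M₂) {p : (Fin l → E) × (Fin m → E)} (hp₁ : Monotone p.1)
    (hp₂ : Monotone p.2) :
    ∑ q ∈ rearrangements p.1 ×ˢ rearrangements p.2,
        (-1 : ℤ) ^ oddInversions O ((splitWord h).symm q) • (X₁ q.1 ⊗ₜ[R] X₂ q.2) =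
      (-1 : ℤ) ^ oddInversions O ((splitWord h).symm p) •
        (orbitSum O X₁ p.1 ⊗ₜ[R] orbitSum O X₂ p.2) := by
  rw [orbitSum_of_monotone O X₁ hp₁, orbitSum_of_monotone O X₂ hp₂, TensorProduct.sum_tmul,
    smul_sum, sum_product]
  refine sum_congr rfl fun u hu => ?_
  rw [TensorProduct.tmul_sum, smul_sum]
  refine sum_congr rfl fun v hv => ?_
  rw [oddInversions_splitWord_symm_of_sorted O h hp₁ hp₂ (mem_rearrangements.mp hu)
    (mem_rearrangements.mp hv), add_comm (oddInversions O u)]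
  simp only [pow_add, mul_smul, TensorProduct.smul_tmul', TensorProduct.tmul_smul]

lemma map_orbitSum (h : l + m = d) {X : (Fin d → E) → M} {X₁ : (Fin l → E) → M₁}
    {X₂ : (Fin m → E) → M₂} (Δ : M →ₗ[R] M₁ ⊗[R] M₂)
    (hΔ : ∀ u, Δ (X u) = X₁ (splitWord h u).1 ⊗ₜ X₂ (splitWord h u).2) (w : Fin d → E) :
    Δ (orbitSum O X w) = (-1 : ℤ) ^ oddInversions O w • ∑ p ∈ sortedSplits h w,
      (-1 : ℤ) ^ oddInversions O ((splitWord h).symm p) •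
        (orbitSum O X₁ p.1 ⊗ₜ[R] orbitSum O X₂ p.2) := by
  calc Δ (orbitSum O X w)
      = (-1 : ℤ) ^ oddInversions O w • ∑ u ∈ rearrangements w, (-1 : ℤ) ^ oddInversions O u •
          (X₁ (splitWord h u).1 ⊗ₜ[R] X₂ (splitWord h u).2) := by
        simp only [orbitSum, map_sum, map_zsmul, hΔ, smul_sum, pow_add, mul_smul]
    _ = (-1 : ℤ) ^ oddInversions O w • ∑ q ∈ splits h w,
          (-1 : ℤ) ^ oddInversions O ((splitWord h).symm q) • (X₁ q.1 ⊗ₜ[R] X₂ q.2) := by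
        simp only [splits, sum_map, Equiv.coe_toEmbedding, Equiv.symm_apply_apply]
    _ = _ := by
        rw [sum_splits_eq_sum_sortedSplits]
        congr 1
        refine sum_congr rfl fun p hp => ?_
        obtain ⟨-, hp₁, hp₂⟩ := mem_filter.mp hp
        exact sum_rearrangements_product_of_sorted O h X₁ X₂ hp₁ hp₂

end OrbitSums

section WordTriples

variable {d l : ℕ}

/-- The word of letters `(b_k, r_k, s_k)` of a triple of words. -/
def letters (w : WordTriple β n d) (k : Fin d) : β × Fin n × Fin n := (w.1 k, w.2.1 k, w.2.2 k)

lemma letters_injective : Function.Injective (letters : WordTriple β n d → _) := by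
  intro v w h
  simp only [funext_iff, letters, Prod.mk.injEq, forall_and] at h
  exact Prod.ext (funext h.1) (Prod.ext (funext h.2.1) (funext h.2.2))

lemma facSel_eq_factorialProd (sel : β → Prop) (w : WordTriple β n d) :
    facSel sel w.1 w.2.1 w.2.2 =
      factorialProd ((content (letters w)).filter fun e => sel e.1) := by
  refine prod_congr ?_ fun e he => ?_
  · ext e
    simp [content, letters]
  · have hsel : sel e.1 := (Multiset.mem_filter.mp (Multiset.mem_toFinset.mp he)).2
    rw [Multiset.count_filter, if_pos hsel, count_content]
    rfl

lemma mem_image_split_iff {hl : l ≤ d} {w : WordTriple β n d}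
    {p : WordTriple β n l × WordTriple β n (d - l)} :
    p ∈ univ.image (fun σ : Equiv.Perm (Fin d) =>
        (firstW l hl (wAct w σ), lastW l hl (wAct w σ))) ↔
      content (letters p.1) + content (letters p.2) = content (letters w) := by
  have split_eq_iff (σ : Equiv.Perm (Fin d)) :
      (firstW l hl (wAct w σ), lastW l hl (wAct w σ)) = p ↔
        letters w ∘ σ = (splitWord (Nat.add_sub_of_le hl)).symm (letters p.1, letters p.2) := by
    rw [Equiv.eq_symm_apply, ← (letters_injective.prodMap letters_injective).eq_iff]
    rfl
  simp only [mem_image, mem_univ, true_and, split_eq_iff, ← content_eq_content_iff,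
    content_splitWord_symm]

end WordTriples

section OddLetters

variable {d l : ℕ} (P : GoodPair 𝕜 A β)

/-- A letter `(a, r, s)` is odd if `a` is. -/
def OddLetter (e : A × Fin n × Fin n) : Prop := e.1 ∈ P.od

lemma content_entryAt (w : WordTriple β n d) :
    content (entryAt P w) = (content (letters w)).map (Prod.map P.bas id) :=
  (Multiset.map_map (Prod.map P.bas id) (letters w) _).symm

lemma isTriB_iff_count_le_one {w : WordTriple β n d} :
    IsTriB P w.1 w.2.1 w.2.2 ↔ ∀ e, P.part e.1 = 2 → (content (letters w)).count e ≤ 1 := by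
  simp only [count_content, card_le_one, mem_filter, mem_univ, true_and]
  refine ⟨fun hw e he k hk k' hk' => ?_, fun hw k k' hne heq hk => ?_⟩
  · by_contra hne
    exact hw k k' hne (hk.trans hk'.symm) (hk ▸ he : P.part (letters w k).1 = 2)
  · exact hne (hw (letters w k) hk k rfl k' heq.symm)

lemma isTriB_of_content_le {v : WordTriple β n l} {w : WordTriple β n d}
    (hw : IsTriB P w.1 w.2.1 w.2.2) (h : content (letters v) ≤ content (letters w)) :
    IsTriB P v.1 v.2.1 v.2.2 := by
  rw [isTriB_iff_count_le_one] at hw ⊢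
  exact fun e he => (Multiset.count_le_of_le e h).trans (hw e he)

lemma isTri0_iff_monotone (ord : LinearOrder (A × Fin n × Fin n)) {w : WordTriple β n d} :
    IsTri0 P ord w ↔ IsTriB P w.1 w.2.1 w.2.2 ∧ Monotone (entryAt P w) := by
  rw [monotone_iff_forall_toLex_le]
  refine and_congr_right fun _ => forall_congr' fun σ => ?_
  rw [le_iff_eq_or_lt, toLex_inj, funext_iff]
  rfl

variable [Nontrivial 𝕜]

lemma letter_map_injective : Function.Injective (Prod.map P.bas (id : Fin n × Fin n → _)) :=
  P.bas.injective.prodMap Function.injective_id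

lemma entryAt_injective : Function.Injective (entryAt P : WordTriple β n d → _) :=
  (letter_map_injective P).comp_left.comp letters_injective

lemma bas_mem_od_iff {i : β} : P.bas i ∈ P.od ↔ P.part i = 2 := by
  refine ⟨fun hod => ?_, P.bas_mem_od i⟩
  by_contra hpart
  have hev : P.bas i ∈ P.ev := by
    obtain h | h : P.part i = 0 ∨ P.part i = 1 := by omega
    · exact P.aa_le_ev (P.bas_mem_aa i h)
    · exact P.aa_sup_cc ▸ Submodule.mem_sup_right (P.bas_mem_cc i h)
  exact P.bas.ne_zero i (Submodule.disjoint_def.mp P.compl.disjoint _ hev hod)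

lemma injOn_entryAt_of_isTriB {w : WordTriple β n d} (hw : IsTriB P w.1 w.2.1 w.2.2) :
    Set.InjOn (entryAt P w) {k | OddLetter P (entryAt P w k)} := by
  intro k hk k' _ heq
  by_contra hne
  have letters_eq : letters w k = letters w k' := letter_map_injective P heq
  exact hw k k' hne letters_eq ((bas_mem_od_iff P).mp hk)

end OddLetters

section Splits

variable {d l : ℕ} (P : GoodPair 𝕜 A β) (ord : LinearOrder (A × Fin n × Fin n)) (hl : l ≤ d)

lemma entryAt_concatW (p : WordTriple β n l × WordTriple β n (d - l)) :
    entryAt P (concatW l hl p) =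
      (splitWord (Nat.add_sub_of_le hl)).symm (entryAt P p.1, entryAt P p.2) := by
  rw [Equiv.eq_symm_apply]
  refine Prod.ext (funext fun k => ?_) (funext fun k => ?_) <;>
    simp [splitWord, Fin.appendEquiv, entryAt, concatW, appF]

variable {P ord hl}

lemma content_letters_of_mem_splitsF {w : WordTriple β n d}
    {p : WordTriple β n l × WordTriple β n (d - l)} (hp : p ∈ splitsF P ord l hl w) :
    content (letters p.1) + content (letters p.2) = content (letters w) :=
  mem_image_split_iff.mp (mem_filter.mp hp).1

lemma facSel_mul_facSel_dvd (sel : β → Prop) {w : WordTriple β n d}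
    {p : WordTriple β n l × WordTriple β n (d - l)} (hp : p ∈ splitsF P ord l hl w) :
    facSel sel p.1.1 p.1.2.1 p.1.2.2 * facSel sel p.2.1 p.2.2.1 p.2.2.2 ∣
      facSel sel w.1 w.2.1 w.2.2 := by
  simp only [facSel_eq_factorialProd, ← content_letters_of_mem_splitsF hp, Multiset.filter_add]
  exact factorialProd_mul_dvd _ _

variable [Nontrivial 𝕜]

lemma mem_splitsF_iff {w : WordTriple β n d} (hw : IsTriB P w.1 w.2.1 w.2.2)
    {p : WordTriple β n l × WordTriple β n (d - l)} :
    p ∈ splitsF P ord l hl w ↔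
      (entryAt P p.1, entryAt P p.2) ∈
        sortedSplits (Nat.add_sub_of_le hl) (entryAt P w) := by
  rw [splitsF, mem_filter, mem_image_split_iff, sortedSplits, mem_filter, mem_splits,
    isTri0_iff_monotone, isTri0_iff_monotone]
  simp only [content_entryAt, ← Multiset.map_add,
    (Multiset.map_injective (letter_map_injective P)).eq_iff]
  refine and_congr_right fun hcontent => ?_
  have h₁ := isTriB_of_content_le P hw (hcontent ▸ Multiset.le_add_right _ (content (letters p.2)))
  have h₂ := isTriB_of_content_le P hw (hcontent ▸ Multiset.le_add_left _ (content (letters p.1)))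
  rw [and_iff_right h₁, and_iff_right h₂]

lemma sum_sortedSplits_eq_sum_splitsF {M : Type*} [AddCommMonoid M] {w : WordTriple β n d}
    (hw : IsTriB P w.1 w.2.1 w.2.2) (f : (Fin l → A × Fin n × Fin n) ×
      (Fin (d - l) → A × Fin n × Fin n) → M) :
    ∑ q ∈ sortedSplits (Nat.add_sub_of_le hl) (entryAt P w), f q =
      ∑ p ∈ splitsF P ord l hl w, f (entryAt P p.1, entryAt P p.2) := by
  have splitWord_entryAt (v : WordTriple β n d) :
      splitWord (Nat.add_sub_of_le hl) (entryAt P v) =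
        (entryAt P (firstW l hl v), entryAt P (lastW l hl v)) := rfl
  refine (sum_nbij (Prod.map (entryAt P) (entryAt P))
    (fun p hp => (mem_splitsF_iff hw).mp hp)
    ((entryAt_injective P).prodMap (entryAt_injective P)).injOn
    (fun q hq => ?_) fun _ _ => rfl).symm
  obtain ⟨hq', -⟩ := mem_filter.mp hq
  rw [mem_splits, ← content_splitWord_symm (Nat.add_sub_of_le hl)] at hq'
  obtain ⟨σ, hσ⟩ := content_eq_content_iff.mp hq'
  have hsplit := (splitWord_entryAt (wAct w σ)).symm.trans ((Equiv.eq_symm_apply _).mp hσ)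
  refine ⟨(firstW l hl (wAct w σ), lastW l hl (wAct w σ)), ?_, hsplit⟩
  exact (mem_splitsF_iff hw).mpr (hsplit.symm ▸ hq)

end Splits

section Coproduct

variable {d l m : ℕ} {P : GoodPair 𝕜 A β} (D : Tower 𝕜 A β n T P)

/-- The pure tensor `ξ^{a_1}_{r_1,s_1} ⊗ ⋯ ⊗ ξ^{a_d}_{r_d,s_d}` of a word in the letters
`(a_k, r_k, s_k)`. -/
def wordTensor (u : Fin d → A × Fin n × Fin n) : T d :=
  D.X (fun k => (u k).1) (fun k => (u k).2.1) (fun k => (u k).2.2)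

/-- The component `M_n(A)^{⊗d} → M_n(A)^{⊗l} ⊗ M_n(A)^{⊗m}` of the coproduct `∇`. -/
def coproduct (h : l + m = d) : T d →ₗ[𝕜] T l ⊗[𝕜] T m :=
  D.nab l m ∘ₗ (tcast h.symm).toLinearMap

lemma coproduct_wordTensor (h : l + m = d) (u : Fin d → A × Fin n × Fin n) :
    coproduct D h (wordTensor D u) =
      wordTensor D (splitWord h u).1 ⊗ₜ wordTensor D (splitWord h u).2 := by
  subst h
  exact D.nab_X l m _ _ _

variable (ord : LinearOrder (A × Fin n × Fin n))

lemma ang_eq_oddInversions (a : Fin d → A) (r s : Fin d → Fin n) :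
    ang P.od ord a r s = oddInversions (OddLetter P) fun k => (a k, r k, s k) := by
  unfold ang oddInversions OddLetter
  congr!

lemma xiH_eq_orbitSum (a : Fin d → A) (r s : Fin d → Fin n) :
    xiH D ord a r s =
      orbitSum (OddLetter P) (wordTensor D) fun k => (a k, r k, s k) := by
  let unzip (u : Fin d → A × Fin n × Fin n) : (Fin d → A) × (Fin d → Fin n) × (Fin d → Fin n) :=
    (fun k => (u k).1, fun k => (u k).2.1, fun k => (u k).2.2)
  have unzip_injective : Function.Injective unzip := by
    intro u v h
    simp only [unzip, Prod.mk.injEq, funext_iff] at h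
    exact funext fun k => Prod.ext (h.1 k) (Prod.ext (h.2.1 k) (h.2.2 k))
  have orbit_eq : (univ.image fun σ : Equiv.Perm (Fin d) => (a ∘ σ, r ∘ σ, s ∘ σ)) =
      (rearrangements fun k => (a k, r k, s k)).image unzip := by
    ext v
    simp only [rearrangements, mem_image, mem_univ, true_and, exists_exists_eq_and]
    rfl
  rw [xiH, orbit_eq, sum_image unzip_injective.injOn, orbitSum]
  simp only [ang_eq_oddInversions]
  rfl

/-- `[T]^!_𝔠`, which counts only the letters of `T` with basis element in `B_𝔠`. -/
abbrev cFactorial (P : GoodPair 𝕜 A β) (w : WordTriple β n d) : ℕ :=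
  facSel (fun i => P.part i = 1) w.1 w.2.1 w.2.2

/-- The element `η_T` of a triple `T = (𝐛,𝐫,𝐬)`. -/
abbrev etaWord (w : WordTriple β n d) : T d := eta D ord w.1 w.2.1 w.2.2

lemma etaWord_eq_smul_orbitSum (w : WordTriple β n d) :
    etaWord D ord w =
      cFactorial P w • orbitSum (OddLetter P) (wordTensor D) (entryAt P w) :=
  congrArg (cFactorial P w • ·) (xiH_eq_orbitSum D ord _ _ _)

lemma etaWord_mem_schurT {w : WordTriple β n d} (hw : IsTri0 P ord w) :
    etaWord D ord w ∈ SchurT D ord d :=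
  Submodule.subset_span ⟨_, _, _, hw.1, rfl⟩

lemma smul_etaWord_tmul_etaWord {hl : l ≤ d} {w : WordTriple β n d}
    {p : WordTriple β n l × WordTriple β n (d - l)} (hp : p ∈ splitsF P ord l hl w) :
    (cFactorial P w / (cFactorial P p.1 * cFactorial P p.2)) •
        (etaWord D ord p.1 ⊗ₜ[𝕜] etaWord D ord p.2) =
      cFactorial P w • (orbitSum (OddLetter P) (wordTensor D) (entryAt P p.1) ⊗ₜ[𝕜]
        orbitSum (OddLetter P) (wordTensor D) (entryAt P p.2)) := by
  rw [etaWord_eq_smul_orbitSum, etaWord_eq_smul_orbitSum, TensorProduct.tmul_smul,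
    ← TensorProduct.smul_tmul', smul_smul, smul_smul, mul_assoc,
    mul_comm (cFactorial P p.2), Nat.div_mul_cancel (facSel_mul_facSel_dvd _ hp)]

variable [Nontrivial 𝕜]

lemma coproduct_etaWord (hl : l ≤ d) {w : WordTriple β n d} (hw : IsTriB P w.1 w.2.1 w.2.2) :
    coproduct D (Nat.add_sub_of_le hl) (etaWord D ord w) =
      (-1 : ℤ) ^ oddInversions (OddLetter P) (entryAt P w) • ∑ p ∈ splitsF P ord l hl w,
        (-1 : ℤ) ^ oddInversions (OddLetter P) (entryAt P (concatW l hl p)) •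
          (cFactorial P w / (cFactorial P p.1 * cFactorial P p.2)) •
            (etaWord D ord p.1 ⊗ₜ[𝕜] etaWord D ord p.2) := by
  rw [etaWord_eq_smul_orbitSum, map_nsmul, map_orbitSum _ _ _ (coproduct_wordTensor D _),
    sum_sortedSplits_eq_sum_splitsF (ord := ord) (hl := hl) hw, smul_comm, smul_sum]
  refine congrArg _ (sum_congr rfl fun p hp => ?_)
  rw [entryAt_concatW, smul_etaWord_tmul_etaWord D ord hp, smul_comm]

lemma oddInversions_entryAt_concatW {hl : l ≤ d} {w : WordTriple β n d} (hw : IsTri0 P ord w)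
    {p : WordTriple β n l × WordTriple β n (d - l)} {σ : Equiv.Perm (Fin d)}
    (hσ : wAct w σ = concatW l hl p) :
    oddInversions (OddLetter P) (entryAt P (concatW l hl p)) =
      sgnc P.od σ fun k => P.bas (w.1 k) := by
  obtain ⟨hB, hmono⟩ := (isTri0_iff_monotone P ord).mp hw
  rw [← hσ]
  exact oddInversions_comp_perm (OddLetter P) hmono (injOn_entryAt_of_isTriB P hB) σ

lemma coproduct_mem_range_of_mem_schurT (hl : l ≤ d) {x : T d} (hx : x ∈ SchurT D ord d) :
    coproduct D (Nat.add_sub_of_le hl) x ∈ LinearMap.range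
      (TensorProduct.map (SchurT D ord l).subtype (SchurT D ord (d - l)).subtype) := by
  suffices h : SchurT D ord d ≤ (LinearMap.range (TensorProduct.map (SchurT D ord l).subtype
      (SchurT D ord (d - l)).subtype)).comap (coproduct D (Nat.add_sub_of_le hl)) from h hx
  refine Submodule.span_le.mpr ?_
  rintro _ ⟨b, r, s, hB, rfl⟩
  rw [SetLike.mem_coe, Submodule.mem_comap, coproduct_etaWord D ord hl (w := (b, r, s)) hB]
  refine zsmul_mem (sum_mem fun p hp => zsmul_mem (nsmul_mem ?_ _) _) _
  obtain ⟨-, h₁, h₂⟩ := mem_filter.mp hp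
  exact ⟨⟨_, etaWord_mem_schurT D ord h₁⟩ ⊗ₜ ⟨_, etaWord_mem_schurT D ord h₂⟩, rfl⟩

end Coproduct

theorem statement5_general {𝕜 A β : Type} [CommRing 𝕜] [Nontrivial 𝕜] [NonUnitalRing A]
    [Module 𝕜 A] {n : ℕ} {T : ℕ → Type} [∀ e, NonUnitalRing (T e)] [∀ e, Module 𝕜 (T e)]
    (P : GoodPair 𝕜 A β) (D : Tower 𝕜 A β n T P) (ord : LinearOrder (A × Fin n × Fin n))
    (d l : ℕ) (hl : l ≤ d)
    (w : WordTriple β n d) (hw : IsTri0 P ord w)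
    (sig : WordTriple β n l × WordTriple β n (d - l) → Equiv.Perm (Fin d))
    (hsig : ∀ p ∈ splitsF P ord l hl w, wAct w (sig p) = concatW l hl p) :
    (∀ p ∈ splitsF P ord l hl w,
      facSel (fun i => P.part i = 1) p.1.1 p.1.2.1 p.1.2.2
          * facSel (fun i => P.part i = 1) p.2.1 p.2.2.1 p.2.2.2
        ∣ facSel (fun i => P.part i = 1) w.1 w.2.1 w.2.2) ∧
    (D.nab l (d - l)
        (tcast (𝕜 := 𝕜) (show d = l + (d - l) by omega) (eta D ord w.1 w.2.1 w.2.2)) =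
      ∑ p ∈ splitsF P ord l hl w,
        ((-1 : ℤ) ^ sgnc P.od (sig p) (fun k => P.bas (w.1 k))) •
          ((facSel (fun i => P.part i = 1) w.1 w.2.1 w.2.2 /
              (facSel (fun i => P.part i = 1) p.1.1 p.1.2.1 p.1.2.2
                * facSel (fun i => P.part i = 1) p.2.1 p.2.2.1 p.2.2.2)) •
            (eta D ord p.1.1 p.1.2.1 p.1.2.2 ⊗ₜ[𝕜] eta D ord p.2.1 p.2.2.1 p.2.2.2))) ∧
    (∀ x ∈ SchurT D ord d, D.nab l (d - l) (tcast (𝕜 := 𝕜) (show d = l + (d - l) by omega) x) ∈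
      LinearMap.range (TensorProduct.map (SchurT D ord l).subtype
        (SchurT D ord (d - l)).subtype)) := by
  refine ⟨fun p hp => facSel_mul_facSel_dvd _ hp, ?_,
    fun x hx => coproduct_mem_range_of_mem_schurT D ord hl hx⟩
  obtain ⟨hB, hmono⟩ := (isTri0_iff_monotone P ord).mp hw
  refine (coproduct_etaWord D ord hl hB).trans ?_
  rw [oddInversions_eq_zero_of_monotone _ hmono, pow_zero, one_smul]
  refine sum_congr rfl fun p hp => ?_
  rw [oddInversions_entryAt_concatW ord hw (hsig p hp)]

/-- For `T = (𝐛,𝐫,𝐬) ∈ Tri^B_0(n,d)`, every split `(T¹,T²) ∈ Spl_l(T)`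
satisfies `[T¹]^!_𝔠·[T²]^!_𝔠 ∣ [T]^!_𝔠`, and the `(l, d-l)`-th component of the coproduct
satisfies
`∇(η_T) = Σ_{(T¹,T²) ∈ Spl_l(T)} (−1)^{⟨σ^T_{T¹,T²};𝐛⟩} ([T]^!_𝔠/([T¹]^!_𝔠[T²]^!_𝔠)) η_{T¹} ⊗ η_{T²}`.
In particular each component of `∇` maps `T^A_𝔞(n,d)` into `T^A_𝔞(n,l) ⊗ T^A_𝔞(n,d−l)`,
so `T^A_𝔞(n) = ⊕_d T^A_𝔞(n,d)` is a sub-supercoalgebra of `⊕_d M_n(A)^{⊗d}`. -/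
theorem statement5 {𝕜 A β : Type} [CommRing 𝕜] [IsDomain 𝕜] [CharZero 𝕜]
    [NonUnitalRing A] [Module 𝕜 A] [SMulCommClass 𝕜 A A] [IsScalarTower 𝕜 A A]
    {n : ℕ} (hn : 0 < n) {T : ℕ → Type} [∀ e, NonUnitalRing (T e)] [∀ e, Module 𝕜 (T e)]
    (P : GoodPair 𝕜 A β) (D : Tower 𝕜 A β n T P) (ord : LinearOrder (A × Fin n × Fin n))
    (d l : ℕ) (hl : l ≤ d)
    (w : WordTriple β n d) (hw : IsTri0 P ord w)
    (sig : WordTriple β n l × WordTriple β n (d - l) → Equiv.Perm (Fin d))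
    (hsig : ∀ p ∈ splitsF P ord l hl w,
      wAct w (sig p) = concatW l hl p ∧
        ∀ σ : Equiv.Perm (Fin d), wAct w σ = concatW l hl p → invCount (sig p) ≤ invCount σ) :
    (∀ p ∈ splitsF P ord l hl w,
      facSel (fun i => P.part i = 1) p.1.1 p.1.2.1 p.1.2.2
          * facSel (fun i => P.part i = 1) p.2.1 p.2.2.1 p.2.2.2
        ∣ facSel (fun i => P.part i = 1) w.1 w.2.1 w.2.2) ∧
    (D.nab l (d - l)
        (tcast (𝕜 := 𝕜) (show d = l + (d - l) by omega) (eta D ord w.1 w.2.1 w.2.2)) =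
      ∑ p ∈ splitsF P ord l hl w,
        ((-1 : ℤ) ^ sgnc P.od (sig p) (fun k => P.bas (w.1 k))) •
          ((facSel (fun i => P.part i = 1) w.1 w.2.1 w.2.2 /
              (facSel (fun i => P.part i = 1) p.1.1 p.1.2.1 p.1.2.2
                * facSel (fun i => P.part i = 1) p.2.1 p.2.2.1 p.2.2.2)) •
            (eta D ord p.1.1 p.1.2.1 p.1.2.2 ⊗ₜ[𝕜] eta D ord p.2.1 p.2.2.1 p.2.2.2))) ∧
    (∀ x ∈ SchurT D ord d, D.nab l (d - l) (tcast (𝕜 := 𝕜) (show d = l + (d - l) by omega) x) ∈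
      LinearMap.range (TensorProduct.map (SchurT D ord l).subtype
        (SchurT D ord (d - l)).subtype)) := by
  exact statement5_general P D ord d l hl w hw sig fun p hp => (hsig p hp).1

end GS
end
end

section
/- Let (𝐛,𝐫,𝐬) ∈ Tri^B(n,d) and (𝐜,𝐭,𝐮) ∈ Tri^B(n,e). Then: (i) ξ^{b_1}_{r_1,s_1} * ⋯ * ξ^{b_d}_{r_d,s_d} = [𝐛,𝐫,𝐬]^! · ξ^𝐛_{𝐫,𝐬}; (ii) the integer [𝐛,𝐫,𝐬]^!·[𝐜,𝐭,𝐮]^! divides [𝐛𝐜,𝐫𝐭,𝐬𝐮]^! and ξ^𝐛_{𝐫,𝐬} * ξ^𝐜_{𝐭,𝐮} = ([𝐛𝐜,𝐫𝐭,𝐬𝐮]^! / ([𝐛,𝐫,𝐬]^!·[𝐜,𝐭,𝐮]^!)) · ξ^{𝐛𝐜}_{𝐫𝐭,𝐬𝐮}; (iii) the integer [𝐛,𝐫,𝐬]^!_𝔞·[𝐜,𝐭,𝐮]^!_𝔞 divides [𝐛𝐜,𝐫𝐭,𝐬𝐮]^!_𝔞 and η^𝐛_{𝐫,𝐬} * η^𝐜_{𝐭,𝐮}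 = ([𝐛𝐜,𝐫𝐭,𝐬𝐮]^!_𝔞 / ([𝐛,𝐫,𝐬]^!_𝔞·[𝐜,𝐭,𝐮]^!_𝔞)) · η^{𝐛𝐜}_{𝐫𝐭,𝐬𝐮}; where in (ii) and (iii) the right-hand side is interpreted as zero when the concatenation (𝐛𝐜,𝐫𝐭,𝐬𝐮) does not lie in Tri^B(n,d+e). -/
open Finset

open scoped Classical TensorProduct

noncomputable section

namespace GS

variable {𝕜 A β : Type} [CommRing 𝕜] [NonUnitalRing A] [Module 𝕜 A]

variable {n : ℕ} {T : ℕ → Type} [∀ e, NonUnitalRing (T e)] [∀ e, Module 𝕜 (T e)]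

/-!
The sum `∑ σ, act σ` over the symmetric group turns `*`-products into concatenations: a permutation
of `d + e` places is, in exactly one way, a block permutation followed by a shuffle, so
`sym x * sym y = sym (x ⊗ y)` for pure tensors `x`, `y`.

For `(𝐛,𝐫,𝐬) ∈ Tri^B(n,d)` the symmetrization of the pure tensor with entries `(𝐛,𝐫,𝐬)` is
`[𝐛,𝐫,𝐬]^! • ξ^𝐛_{𝐫,𝐬}`: the signs match because the number of disagreements between two
linear orders on the odd places is additive modulo `2`, and each term is repeated as often as the
stabilizer of `(𝐛,𝐫,𝐬)` has elements. If an odd entry is repeated, the transposition of two of its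
occurrences changes the sign of the tensor, and the symmetrization vanishes. Cancelling the factors
`[·]^!` gives the product formulas.
-/

section Inversions

variable {ι α α' α'' : Type*}

/-- The number of pairs of elements of `s` that `f` and `g` put in opposite orders. For `f` the
identity of `Fin d` and `s` the set of odd places, it is the exponent of the Koszul sign. -/
def inversions [LinearOrder α] [LinearOrder α'] (s : Finset ι) (f : ι → α) (g : ι → α') : ℕ :=
  #{p ∈ s ×ˢ s | f p.1 < f p.2 ∧ g p.2 < g p.1}

theorem inversions_comp_equiv [LinearOrder α] [LinearOrder α'] {κ : Type*} {s : Finset ι}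
    {t : Finset κ} (σ : κ ≃ ι) (hst : ∀ k, k ∈ t ↔ σ k ∈ s) (f : ι → α) (g : ι → α') :
    inversions t (f ∘ σ) (g ∘ σ) = inversions s f g :=
  card_equiv (Equiv.prodCongr σ σ) fun p => by simp [hst]

theorem card_filter_pairs_eq_add [LinearOrder α] {s : Finset ι} {h : ι → α} (hh : Set.InjOn h s)
    {Q : ι × ι → Prop} [DecidablePred Q] (hQ : ∀ p, Q p → p.1 ≠ p.2) :
    #{p ∈ s ×ˢ s | Q p}
      = #{p ∈ s ×ˢ s | Q p ∧ h p.1 < h p.2} + #{p ∈ s ×ˢ s | Q p ∧ h p.2 < h p.1} := by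
  rw [← card_filter_add_card_filter_not (fun p => h p.1 < h p.2), filter_filter, filter_filter]
  congr 2
  refine filter_congr fun p hp => and_congr_right fun hp' => ?_
  obtain ⟨h₁, h₂⟩ := mem_product.1 hp
  have hne : h p.2 ≠ h p.1 := fun e => hQ p hp' (hh h₂ h₁ e).symm
  exact not_lt.trans hne.le_iff_lt

theorem neg_one_pow_inversions_add_inversions [LinearOrder α] [LinearOrder α'] [LinearOrder α'']
    {s : Finset ι} {f : ι → α} {g : ι → α'} {h : ι → α''}
    (hf : Set.InjOn f s) (hg : Set.InjOn g s) (hh : Set.InjOn h s) :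
    (-1 : ℤ) ^ (inversions s f g + inversions s g h) = (-1) ^ inversions s f h := by
  have split_fg := card_filter_pairs_eq_add hh
    (Q := fun p => f p.1 < f p.2 ∧ g p.2 < g p.1) (fun p hp e => by simp [e] at hp)
  have split_gh := card_filter_pairs_eq_add hf
    (Q := fun p => g p.1 < g p.2 ∧ h p.2 < h p.1) (fun p hp e => by simp [e] at hp)
  have split_fh := card_filter_pairs_eq_add hg
    (Q := fun p => f p.1 < f p.2 ∧ h p.2 < h p.1) (fun p hp e => by simp [e] at hp)
  have swap_pairs : #{p ∈ s ×ˢ s | (g p.1 < g p.2 ∧ h p.2 < h p.1) ∧ f p.2 < f p.1}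
      = #{p ∈ s ×ˢ s | (f p.1 < f p.2 ∧ g p.2 < g p.1) ∧ h p.1 < h p.2} :=
    card_equiv (Equiv.prodComm _ _) fun p => by
      simp only [mem_filter, mem_product, Equiv.prodComm_apply, Prod.fst_swap, Prod.snd_swap]
      tauto
  have parity : inversions s f g + inversions s g h = inversions s f h
      + 2 * #{p ∈ s ×ˢ s | (f p.1 < f p.2 ∧ g p.2 < g p.1) ∧ h p.1 < h p.2} := by
    simp only [inversions]
    rw [split_fg, split_gh, split_fh, swap_pairs]
    simp only [and_assoc, and_comm, and_left_comm]
    ring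
  rw [parity, pow_add, pow_mul]
  simp

end Inversions

section BlockPermutations

variable {d e : ℕ}

/-- The block permutation `σ ⊕ ρ` of `d + e` places, the embedding of `S_d × S_e` in `S_{d+e}`. -/
def blockPerm (d e : ℕ) :
    Equiv.Perm (Fin d) × Equiv.Perm (Fin e) →* Equiv.Perm (Fin (d + e)) :=
  finSumFinEquiv.permCongrHom.toMonoidHom.comp (Equiv.Perm.sumCongrHom _ _)

@[simp]
theorem blockPerm_castAdd (x : Equiv.Perm (Fin d) × Equiv.Perm (Fin e)) (k : Fin d) :
    blockPerm d e x (Fin.castAdd e k) = Fin.castAdd e (x.1 k) := by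
  simp [blockPerm, Equiv.permCongr_apply]

@[simp]
theorem blockPerm_natAdd (x : Equiv.Perm (Fin d) × Equiv.Perm (Fin e)) (k : Fin e) :
    blockPerm d e x (Fin.natAdd d k) = Fin.natAdd d (x.2 k) := by
  simp [blockPerm, Equiv.permCongr_apply]

theorem append_comp_blockPerm {α : Type*} (x : Equiv.Perm (Fin d) × Equiv.Perm (Fin e))
    (a : Fin d → α) (c : Fin e → α) :
    Fin.append a c ∘ blockPerm d e x = Fin.append (a ∘ x.1) (c ∘ x.2) := by
  simp [funext_iff, Fin.forall_fin_add]

theorem castAdd_lt_castAdd_iff {k l : Fin d} : Fin.castAdd e k < Fin.castAdd e l ↔ k < l :=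
  Iff.rfl

theorem not_natAdd_lt_castAdd (j : Fin e) (i : Fin d) : ¬ Fin.natAdd d j < Fin.castAdd e i := by
  simp only [Fin.lt_def, Fin.val_natAdd, Fin.val_castAdd]
  lia

theorem isShuffle_iff_strictMono {τ : Equiv.Perm (Fin (d + e))} :
    IsShuffle d e τ ↔ StrictMono (⇑τ⁻¹ ∘ Fin.castAdd e) ∧ StrictMono (⇑τ⁻¹ ∘ Fin.natAdd d) := by
  simp [IsShuffle, StrictMono, Fin.forall_fin_add, castAdd_lt_castAdd_iff, not_natAdd_lt_castAdd]

theorem eq_one_of_blockPerm_mul_isShuffle {x : Equiv.Perm (Fin d) × Equiv.Perm (Fin e)}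
    {τ : Equiv.Perm (Fin (d + e))} (hτ : IsShuffle d e τ)
    (hxτ : IsShuffle d e (blockPerm d e x * τ)) : x = 1 := by
  have eq_one_of_strictMono {m : ℕ} {σ : Equiv.Perm (Fin m)} (h : StrictMono σ) : σ = 1 :=
    DFunLike.coe_injective h.eq_id
  have hinv : τ⁻¹ = (blockPerm d e x * τ)⁻¹ * blockPerm d e x := by group
  rw [isShuffle_iff_strictMono] at hτ hxτ
  rw [hinv] at hτ
  refine Prod.ext (eq_one_of_strictMono fun k l hkl => ?_) (eq_one_of_strictMono fun k l hkl => ?_)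
  · exact hxτ.1.lt_iff_lt.1 (by simpa [-mul_inv_rev] using hτ.1 hkl)
  · exact hxτ.2.lt_iff_lt.1 (by simpa [-mul_inv_rev] using hτ.2 hkl)

theorem exists_perm_strictMono_comp {α : Type*} [LinearOrder α] {f : Fin d → α}
    (hf : Function.Injective f) : ∃ σ : Equiv.Perm (Fin d), StrictMono (f ∘ σ) :=
  ⟨Tuple.sort f, (Tuple.monotone_sort f).strictMono_of_injective
    (hf.comp (Tuple.sort f).injective)⟩

theorem bijective_blockPerm_mul_isShuffle (d e : ℕ) :
    Function.Bijective fun x : (Equiv.Perm (Fin d) × Equiv.Perm (Fin e)) × {τ // IsShuffle d e τ} =>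
      blockPerm d e x.1 * x.2 := by
  constructor
  · rintro ⟨x, τ, hτ⟩ ⟨x', τ', hτ'⟩ h
    dsimp only at h
    have hτ'_eq : τ' = blockPerm d e (x'⁻¹ * x) * τ := by
      rw [map_mul, map_inv, mul_assoc, h, inv_mul_cancel_left]
    have hx : x' = x :=
      inv_mul_eq_one.1 (eq_one_of_blockPerm_mul_isShuffle hτ (hτ'_eq ▸ hτ'))
    simp_all
  · intro π
    obtain ⟨σ, hσ⟩ := exists_perm_strictMono_comp
      (π⁻¹.injective.comp (Fin.castAdd_injective d e))
    obtain ⟨ρ, hρ⟩ := exists_perm_strictMono_comp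
      (π⁻¹.injective.comp (Fin.natAdd_injective e d))
    refine ⟨((σ, ρ), ⟨(blockPerm d e (σ, ρ))⁻¹ * π, isShuffle_iff_strictMono.2 ?_⟩), by simp⟩
    constructor
    · convert hσ using 1
      ext k
      simp
    · convert hρ using 1
      ext k
      simp

theorem sum_isShuffle_blockPerm_mul {M : Type*} [AddCommMonoid M] (d e : ℕ)
    (F : Equiv.Perm (Fin (d + e)) → M) :
    ∑ σ, ∑ ρ, ∑ τ with IsShuffle d e τ, F (blockPerm d e (σ, ρ) * τ) = ∑ π, F π := by
  rw [← (bijective_blockPerm_mul_isShuffle d e).sum_comp, Fintype.sum_prod_type,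
    Fintype.sum_prod_type]
  exact sum_congr rfl fun σ _ => sum_congr rfl fun ρ _ => sum_subtype _ (by simp) _

end BlockPermutations

section Signs

variable {d e : ℕ} (od : Submodule 𝕜 A)

theorem sgnc_eq_inversions (σ : Equiv.Perm (Fin d)) (a : Fin d → A) :
    sgnc od σ a = inversions {k | a k ∈ od} id ⇑σ⁻¹ := by
  simp only [sgnc, inversions]
  congr 1
  ext p
  simp only [mem_filter, mem_univ, true_and, mem_product, id]
  tauto

theorem ang_comp_eq_inversions (ord : LinearOrder (A × Fin n × Fin n)) (a : Fin d → A)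
    (r s : Fin d → Fin n) (σ : Equiv.Perm (Fin d)) :
    ang od ord (a ∘ σ) (r ∘ σ) (s ∘ σ)
      = inversions {k | a k ∈ od} ⇑σ⁻¹ (fun k => (a k, r k, s k)) := by
  rw [← inversions_comp_equiv (t := {k | a (σ k) ∈ od}) σ (by simp)]
  simp only [ang, inversions]
  congr 1
  ext p
  simp only [mem_filter, mem_univ, true_and, mem_product, Function.comp_apply,
    Equiv.Perm.coe_inv, Equiv.symm_apply_apply]
  tauto

theorem neg_one_pow_ang_add_ang_comp (ord : LinearOrder (A × Fin n × Fin n)) {a : Fin d → A}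
    {r s : Fin d → Fin n} (hinj : Set.InjOn (fun k => (a k, r k, s k)) {k | a k ∈ od})
    (σ : Equiv.Perm (Fin d)) :
    (-1 : ℤ) ^ (ang od ord a r s + ang od ord (a ∘ σ) (r ∘ σ) (s ∘ σ)) = (-1) ^ sgnc od σ a := by
  have ang_eq := ang_comp_eq_inversions od ord a r s 1
  simp only [Equiv.Perm.coe_one, inv_one, Function.comp_id] at ang_eq
  have cocycle := neg_one_pow_inversions_add_inversions (s := {k | a k ∈ od})
    Function.injective_id.injOn σ⁻¹.injective.injOn (by simpa using hinj)
  rw [pow_add, ang_comp_eq_inversions, ang_eq, sgnc_eq_inversions, ← cocycle, pow_add, mul_assoc,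
    ← pow_add, Even.neg_one_pow (Even.add_self _), mul_one]

theorem sgnc_blockPerm (σ : Equiv.Perm (Fin d)) (ρ : Equiv.Perm (Fin e)) (a : Fin d → A)
    (c : Fin e → A) :
    sgnc od (blockPerm d e (σ, ρ)) (Fin.append a c) = sgnc od σ a + sgnc od ρ c := by
  simp only [sgnc, card_filter, Fintype.sum_prod_type, Fin.sum_univ_add, ← map_inv, Prod.inv_mk,
    blockPerm_castAdd, blockPerm_natAdd, Fin.append_left, Fin.append_right, castAdd_lt_castAdd_iff,
    Fin.natAdd_lt_natAdd_iff, not_natAdd_lt_castAdd, false_and, and_false, if_false,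
    sum_const_zero, add_zero, zero_add]

theorem neg_one_pow_sgnc_swap {a : Fin d → A} {k l : Fin d} (hkl : k ≠ l) (hk : a k ∈ od)
    (hl : a l ∈ od) : (-1 : ℤ) ^ sgnc od (Equiv.swap k l) a = -1 := by
  wlog hlt : k < l generalizing k l
  · rw [Equiv.swap_comm, this hkl.symm hl hk (lt_of_le_of_ne (not_lt.1 hlt) hkl.symm)]
  have mem_od_swap {x : Fin d} (hx : a x ∈ od) : a (Equiv.swap k l x) ∈ od := by
    rw [Equiv.swap_apply_def]
    split_ifs <;> assumption
  set I : Finset (Fin d × Fin d) :=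
    {p | p.1 < p.2 ∧ Equiv.swap k l p.2 < Equiv.swap k l p.1 ∧ a p.1 ∈ od ∧ a p.2 ∈ od} with hI
  have mem_I : (k, l) ∈ I := by simp [hI, hlt, hk, hl]
  -- The other inversions pair off under `(x, y) ↦ (swap k l y, swap k l x)`.
  have prod_erase : ∏ _p ∈ I.erase (k, l), (-1 : ℤ) = 1 := by
    refine prod_involution (fun p _ => (Equiv.swap k l p.2, Equiv.swap k l p.1)) (by simp) ?_ ?_ ?_
    · rintro ⟨x, y⟩ hp - h
      simp only [hI, mem_erase, mem_filter, Prod.mk.injEq] at hp h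
      grind
    · rintro ⟨x, y⟩ hp
      simp only [hI, mem_erase, mem_filter_univ, ne_eq, Prod.mk.injEq, Equiv.swap_apply_self,
        Equiv.swap_apply_eq_iff, Equiv.swap_apply_left, Equiv.swap_apply_right] at hp ⊢
      exact ⟨fun h => hp.1 h.symm, hp.2.2.1, hp.2.1, mem_od_swap hp.2.2.2.2,
        mem_od_swap hp.2.2.2.1⟩
    · simp
  rw [sgnc, Equiv.swap_inv, ← prod_const, ← hI, ← mul_prod_erase _ _ mem_I, prod_erase, mul_one]

end Signs

section Symmetrization

variable {P : GoodPair 𝕜 A β} (D : Tower 𝕜 A β n T P) {d e : ℕ}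

/-- The sum of all place permutations of a tensor of degree `d`. -/
def Tower.symmetrize (d : ℕ) : T d →ₗ[𝕜] T d :=
  ∑ σ : Equiv.Perm (Fin d), D.act σ

theorem Tower.symmetrize_apply (x : T d) :
    D.symmetrize d x = ∑ σ : Equiv.Perm (Fin d), D.act σ x :=
  LinearMap.sum_apply _ _ _

theorem Tower.act_one_X {a : Fin d → A} (ha : ∀ k, Homog P (a k)) (r s : Fin d → Fin n) :
    D.act 1 (D.X a r s) = D.X a r s := by
  have sgnc_one : sgnc P.od 1 a = 0 := by
    simp only [sgnc, card_eq_zero, filter_eq_empty_iff, inv_one, Equiv.Perm.one_apply]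
    exact fun p _ h => lt_asymm h.1 h.2.1
  simp [D.act_X _ _ _ _ ha, sgnc_one]

theorem Tower.symmetrize_X_of_subsingleton [Subsingleton (Fin d)] {a : Fin d → A}
    (ha : ∀ k, Homog P (a k)) (r s : Fin d → Fin n) :
    D.symmetrize d (D.X a r s) = D.X a r s := by
  rw [symmetrize_apply, Fintype.sum_subsingleton _ 1, D.act_one_X ha]

theorem homog_append {a : Fin d → A} {c : Fin e → A} (ha : ∀ k, Homog P (a k))
    (hc : ∀ k, Homog P (c k)) (k : Fin (d + e)) : Homog P (Fin.append a c k) := by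
  induction k using Fin.addCases <;> simp [ha, hc]

theorem Tower.star_act_X_act_X {a : Fin d → A} {c : Fin e → A} (ha : ∀ k, Homog P (a k))
    (hc : ∀ k, Homog P (c k)) (r s : Fin d → Fin n) (t u : Fin e → Fin n)
    (σ : Equiv.Perm (Fin d)) (ρ : Equiv.Perm (Fin e)) :
    D.star (D.act σ (D.X a r s)) (D.act ρ (D.X c t u))
      = ∑ τ with IsShuffle d e τ,
        D.act (blockPerm d e (σ, ρ) * τ)
          (D.X (Fin.append a c) (Fin.append r t) (Fin.append s u)) := by
  rw [D.act_X σ a r s ha, D.act_X ρ c t u hc, map_zsmul, map_zsmul, LinearMap.smul_apply,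
    D.star_X, smul_smul, smul_sum]
  refine sum_congr rfl fun τ _ => ?_
  rw [← D.act_act, D.act_X (blockPerm d e (σ, ρ)) _ _ _ (homog_append ha hc), map_zsmul,
    sgnc_blockPerm, append_comp_blockPerm, append_comp_blockPerm, append_comp_blockPerm, pow_add,
    mul_comm]

theorem Tower.star_symmetrize_X {a : Fin d → A} {c : Fin e → A} (ha : ∀ k, Homog P (a k))
    (hc : ∀ k, Homog P (c k)) (r s : Fin d → Fin n) (t u : Fin e → Fin n) :
    D.star (D.symmetrize d (D.X a r s)) (D.symmetrize e (D.X c t u))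
      = D.symmetrize (d + e) (D.X (Fin.append a c) (Fin.append r t) (Fin.append s u)) := by
  simp only [symmetrize_apply]
  rw [map_sum, ← sum_isShuffle_blockPerm_mul d e, sum_comm]
  refine sum_congr rfl fun ρ _ => ?_
  rw [map_sum, LinearMap.sum_apply]
  exact sum_congr rfl fun σ _ => D.star_act_X_act_X ha hc r s t u σ ρ

theorem Tower.starIter_eq_symmetrize_X (a : Fin d → A) (ha : ∀ k, Homog P (a k))
    (r s : Fin d → Fin n) : starIter D d a r s = D.symmetrize d (D.X a r s) := by
  induction d with
  | zero =>
    rw [D.symmetrize_X_of_subsingleton ha, starIter]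
    congr 1 <;> exact Subsingleton.elim _ _
  | succ d ih =>
    have append_last {α : Type} (f : Fin (d + 1) → α) :
        Fin.append (f ∘ Fin.castSucc) (fun _ : Fin 1 => f (Fin.last d)) = f := by
      rw [Fin.append_right_eq_snoc]
      exact Fin.snoc_init_self f
    have ha_init (k : Fin d) : Homog P ((a ∘ Fin.castSucc) k) := ha k.castSucc
    have ha_last (_ : Fin 1) : Homog P (a (Fin.last d)) := ha (Fin.last d)
    rw [starIter, ih _ ha_init, ← D.symmetrize_X_of_subsingleton ha_last,
      D.star_symmetrize_X ha_init ha_last, append_last, append_last, append_last]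

theorem comp_swap_eq_self {α : Type*} {f : Fin d → α} {k l : Fin d} (h : f k = f l) :
    f ∘ Equiv.swap k l = f := by
  rw [Equiv.comp_swap_eq_update, h, Function.update_eq_self, ← h, Function.update_eq_self]

theorem Tower.symmetrize_X_eq_zero {a : Fin d → A} (ha : ∀ k, Homog P (a k)) {r s : Fin d → Fin n}
    {k l : Fin d} (hkl : k ≠ l) (heq : (a k, r k, s k) = (a l, r l, s l)) (hk : a k ∈ P.od) :
    D.symmetrize d (D.X a r s) = 0 := by
  obtain ⟨hakl, hrkl, hskl⟩ : a k = a l ∧ r k = r l ∧ s k = s l := by simpa using heq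
  have act_swap : D.act (Equiv.swap k l) (D.X a r s) = -D.X a r s := by
    rw [D.act_X _ _ _ _ ha, neg_one_pow_sgnc_swap P.od hkl hk (hakl ▸ hk), comp_swap_eq_self hakl,
      comp_swap_eq_self hrkl, comp_swap_eq_self hskl, neg_one_smul]
  rw [symmetrize_apply]
  refine sum_involution (fun σ _ => Equiv.swap k l * σ) (fun σ _ => ?_) (fun σ _ _ => ?_) (by simp)
    (by simp)
  · rw [← D.act_act, act_swap, map_neg, add_neg_cancel]
  · simpa using hkl

end Symmetrization

section Orbits

variable {P : GoodPair 𝕜 A β} (D : Tower 𝕜 A β n T P) {d : ℕ}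

theorem IsTriH.injOn_odd {a : Fin d → A} {r s : Fin d → Fin n} (h : IsTriH P a r s) :
    Set.InjOn (fun k => (a k, r k, s k)) {k | a k ∈ P.od} := by
  intro k hk l _ heq
  by_contra hkl
  exact (h.1 k).2 (Submodule.disjoint_def.1 P.compl.disjoint _ (h.2 k l hkl heq) hk)

theorem card_comp_eq_comp {ι α : Type*} [Fintype ι] [DecidableEq ι] [DecidableEq α] (f : ι → α)
    (σ : Equiv.Perm ι) :
    #{τ : Equiv.Perm ι | f ∘ τ = f ∘ σ} = #{τ : Equiv.Perm ι | f ∘ τ = f} :=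
  card_equiv (Equiv.mulRight σ⁻¹) fun τ => by
    simp only [mem_filter_univ, Equiv.coe_mulRight, Equiv.Perm.coe_mul, ← Function.comp_assoc]
    exact (σ.comp_symm_eq _ _).symm

theorem Tower.symmetrize_X_of_isTriH (ord : LinearOrder (A × Fin n × Fin n)) {a : Fin d → A}
    {r s : Fin d → Fin n} (h : IsTriH P a r s) :
    D.symmetrize d (D.X a r s)
      = #{τ : Equiv.Perm (Fin d) | (fun k => (a k, r k, s k)) ∘ τ = fun k => (a k, r k, s k)} •
        xiH D ord a r s := by
  let term (w : (Fin d → A) × (Fin d → Fin n) × (Fin d → Fin n)) : T d :=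
    ((-1 : ℤ) ^ (ang P.od ord a r s + ang P.od ord w.1 w.2.1 w.2.2)) • D.X w.1 w.2.1 w.2.2
  have act_eq (σ : Equiv.Perm (Fin d)) :
      D.act σ (D.X a r s) = term (a ∘ σ, r ∘ σ, s ∘ σ) := by
    rw [D.act_X σ a r s fun k => (h.1 k).1, ← neg_one_pow_ang_add_ang_comp P.od ord h.injOn_odd]
  rw [D.symmetrize_apply, sum_congr rfl fun σ _ => act_eq σ, xiH, smul_sum,
    sum_comp term fun σ : Equiv.Perm (Fin d) => (a ∘ σ, r ∘ σ, s ∘ σ)]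
  refine sum_congr rfl fun w hw => ?_
  obtain ⟨σ, -, rfl⟩ := mem_image.1 hw
  rw [← card_comp_eq_comp _ σ]
  congr 2
  ext τ
  simp only [mem_filter_univ, Prod.mk.injEq, funext_iff, Function.comp_apply, forall_and]

end Orbits

section BasisWords

variable {P : GoodPair 𝕜 A β} (D : Tower 𝕜 A β n T P) {d : ℕ}

theorem GoodPair.bas_mem_ev {i : β} (hi : P.part i ≠ 2) : P.bas i ∈ P.ev := by
  obtain h | h : P.part i = 0 ∨ P.part i = 1 := by lia
  · exact P.aa_le_ev (P.bas_mem_aa i h)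
  · exact P.aa_sup_cc ▸ Submodule.mem_sup_right (P.bas_mem_cc i h)

theorem GoodPair.homog_bas (P : GoodPair 𝕜 A β) (i : β) : Homog P (P.bas i) :=
  (eq_or_ne (P.part i) 2).elim (fun h => .inr (P.bas_mem_od i h)) fun h => .inl (P.bas_mem_ev h)

theorem IsTriB.isTriH [Nontrivial 𝕜] {b : Fin d → β} {r s : Fin d → Fin n}
    (h : IsTriB P b r s) : IsTriH P (fun k => P.bas (b k)) r s :=
  ⟨fun k => ⟨P.homog_bas (b k), P.bas.ne_zero (b k)⟩, fun k l hkl heq =>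
    P.bas_mem_ev (h k l hkl (by simpa [P.bas.injective.eq_iff] using heq))⟩

theorem facSel_true (b : Fin d → β) (r s : Fin d → Fin n) :
    facSel (fun _ => True) b r s
      = #{τ : Equiv.Perm (Fin d) | (fun k => (b k, r k, s k)) ∘ τ = fun k => (b k, r k, s k)} := by
  have := DomMulAct.stabilizer_card' fun k => (b k, r k, s k)
  simp only [Fintype.card_subtype] at this
  rw [facSel, filter_true]
  simp only [mco]
  convert this.symm

theorem Tower.symmetrize_X_of_isTriB [Nontrivial 𝕜] (ord : LinearOrder (A × Fin n × Fin n))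
    {b : Fin d → β} {r s : Fin d → Fin n} (h : IsTriB P b r s) :
    D.symmetrize d (D.X (fun k => P.bas (b k)) r s)
      = facSel (fun _ => True) b r s • xiB D ord b r s := by
  rw [D.symmetrize_X_of_isTriH ord h.isTriH, facSel_true, xiB]
  simp only [funext_iff, Function.comp_apply, Prod.mk.injEq, P.bas.injective.eq_iff]

theorem Tower.symmetrize_X_of_not_isTriB {b : Fin d → β} {r s : Fin d → Fin n}
    (h : ¬ IsTriB P b r s) : D.symmetrize d (D.X (fun k => P.bas (b k)) r s) = 0 := by
  simp only [IsTriB, not_forall, not_not] at h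
  obtain ⟨k, l, hkl, heq, hk⟩ := h
  refine D.symmetrize_X_eq_zero (fun k => P.homog_bas (b k)) hkl ?_ (P.bas_mem_od _ hk)
  simp_all

end BasisWords

section Multiplicities

variable {P : GoodPair 𝕜 A β} {d e : ℕ} (sel : β → Prop) (b : Fin d → β) (r s : Fin d → Fin n)
  (c : Fin e → β) (t u : Fin e → Fin n)

theorem mco_append (w : β × Fin n × Fin n) :
    mco (Fin.append b c) (Fin.append r t) (Fin.append s u) w = mco b r s w + mco c t u w := by
  simp only [mco, card_filter, Fin.sum_univ_add, Fin.append_left, Fin.append_right]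

theorem facSel_ne_zero : facSel sel b r s ≠ 0 :=
  prod_ne_zero_iff.2 fun _ _ => Nat.factorial_ne_zero _

variable {b r s} in
theorem facSel_eq_prod {S : Finset (β × Fin n × Fin n)} (hS : ∀ k, (b k, r k, s k) ∈ S) :
    facSel sel b r s = ∏ w ∈ S with sel w.1, (mco b r s w).factorial := by
  refine prod_subset (filter_subset_filter _ (image_subset_iff.2 fun k _ => hS k)) ?_
  intro w hwS hw
  have mco_eq_zero : mco b r s w = 0 := by
    simp only [mco, card_eq_zero, filter_eq_empty_iff]
    rintro k - rfl
    exact hw (mem_filter.2 ⟨mem_image_of_mem _ (mem_univ k), (mem_filter.1 hwS).2⟩)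
  rw [mco_eq_zero, Nat.factorial_zero]

theorem facSel_mul_facSel_dvd_s6 :
    facSel sel b r s * facSel sel c t u
      ∣ facSel sel (Fin.append b c) (Fin.append r t) (Fin.append s u) := by
  let S : Finset (β × Fin n × Fin n) := univ.image fun k =>
    (Fin.append b c k, Fin.append r t k, Fin.append s u k)
  have mem_S (k : Fin (d + e)) :
      (Fin.append b c k, Fin.append r t k, Fin.append s u k) ∈ S :=
    mem_image_of_mem _ (mem_univ k)
  rw [facSel_eq_prod sel fun k => by simpa using mem_S (Fin.castAdd e k),
    facSel_eq_prod sel fun k => by simpa using mem_S (Fin.natAdd d k),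
    facSel_eq_prod sel mem_S, ← prod_mul_distrib]
  refine prod_dvd_prod_of_dvd _ _ fun w _ => ?_
  rw [mco_append]
  exact Nat.factorial_mul_factorial_dvd_factorial_add _ _

variable {b r s} in
theorem IsTriB.mco_le_one (h : IsTriB P b r s) {w : β × Fin n × Fin n} (hw : P.part w.1 = 2) :
    mco b r s w ≤ 1 := by
  simp only [mco, card_le_one, mem_filter_univ]
  rintro k rfl l hl
  by_contra hkl
  exact h k l hkl hl.symm hw

variable {b r s} in
theorem IsTriB.facSel_true_eq_mul (h : IsTriB P b r s) :
    facSel (fun _ => True) b r s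
      = facSel (fun i => P.part i = 0) b r s * facSel (fun i => P.part i = 1) b r s := by
  simp only [facSel, prod_filter]
  rw [← prod_mul_distrib]
  refine prod_congr rfl fun w _ => ?_
  obtain h0 | h1 | h2 : P.part w.1 = 0 ∨ P.part w.1 = 1 ∨ P.part w.1 = 2 := by lia
  · simp [h0]
  · simp [h1]
  · simp [h2, Nat.factorial_eq_one.2 (h.mco_le_one h2)]

end Multiplicities

section StarProducts

variable {P : GoodPair 𝕜 A β} (D : Tower 𝕜 A β n T P) (ord : LinearOrder (A × Fin n × Fin n))
  {d e : ℕ} {b : Fin d → β} {r s : Fin d → Fin n} {c : Fin e → β} {t u : Fin e → Fin n}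

include D in
theorem Tower.isAddTorsionFree [IsAddTorsionFree 𝕜] (d : ℕ) : IsAddTorsionFree (T d) :=
  (D.bas d).repr.injective.isAddTorsionFree (D.bas d).repr.toLinearMap.toAddMonoidHom

theorem Tower.nsmul_star_xiB [Nontrivial 𝕜] (hb : IsTriB P b r s) (hc : IsTriB P c t u) :
    (facSel (fun _ => True) b r s * facSel (fun _ => True) c t u) •
        D.star (xiB D ord b r s) (xiB D ord c t u)
      = D.symmetrize (d + e)
          (D.X (fun k => P.bas (Fin.append b c k)) (Fin.append r t) (Fin.append s u)) := by
  have append_bas : (fun k => P.bas (Fin.append b c k))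
      = Fin.append (fun k => P.bas (b k)) fun k => P.bas (c k) := by
    simp [funext_iff, Fin.forall_fin_add]
  rw [append_bas, ← D.star_symmetrize_X (fun k => P.homog_bas (b k)) fun k => P.homog_bas (c k),
    D.symmetrize_X_of_isTriB ord hb, D.symmetrize_X_of_isTriB ord hc, map_nsmul, map_nsmul,
    LinearMap.smul_apply, smul_smul, mul_comm]

theorem Tower.star_eta :
    D.star (eta D ord b r s) (eta D ord c t u)
      = (facSel (fun i => P.part i = 1) b r s * facSel (fun i => P.part i = 1) c t u) •
          D.star (xiB D ord b r s) (xiB D ord c t u) := by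
  rw [eta, eta, map_nsmul, map_nsmul, LinearMap.smul_apply, smul_smul, mul_comm]

variable [Nontrivial 𝕜] [IsAddTorsionFree 𝕜]

theorem Tower.star_xiB_of_isTriB (hb : IsTriB P b r s) (hc : IsTriB P c t u)
    (hbc : IsTriB P (Fin.append b c) (Fin.append r t) (Fin.append s u)) :
    D.star (xiB D ord b r s) (xiB D ord c t u)
      = (facSel (fun _ => True) (Fin.append b c) (Fin.append r t) (Fin.append s u) /
          (facSel (fun _ => True) b r s * facSel (fun _ => True) c t u)) •
          xiB D ord (Fin.append b c) (Fin.append r t) (Fin.append s u) := by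
  have := D.isAddTorsionFree (d + e)
  refine nsmul_right_injective (mul_ne_zero (facSel_ne_zero (fun _ => True) b r s)
    (facSel_ne_zero (fun _ => True) c t u)) ?_
  dsimp only
  rw [D.nsmul_star_xiB ord hb hc, D.symmetrize_X_of_isTriB ord hbc, smul_smul,
    Nat.mul_div_cancel' (facSel_mul_facSel_dvd_s6 ..)]

theorem Tower.star_xiB_eq_zero (hb : IsTriB P b r s) (hc : IsTriB P c t u)
    (hbc : ¬ IsTriB P (Fin.append b c) (Fin.append r t) (Fin.append s u)) :
    D.star (xiB D ord b r s) (xiB D ord c t u) = 0 := by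
  have := D.isAddTorsionFree (d + e)
  refine nsmul_right_injective (mul_ne_zero (facSel_ne_zero (fun _ => True) b r s)
    (facSel_ne_zero (fun _ => True) c t u)) ?_
  dsimp only
  rw [D.nsmul_star_xiB ord hb hc, D.symmetrize_X_of_not_isTriB hbc, smul_zero]

theorem Tower.star_eta_of_isTriB (hb : IsTriB P b r s) (hc : IsTriB P c t u)
    (hbc : IsTriB P (Fin.append b c) (Fin.append r t) (Fin.append s u)) :
    D.star (eta D ord b r s) (eta D ord c t u)
      = (facSel (fun i => P.part i = 0) (Fin.append b c) (Fin.append r t) (Fin.append s u) /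
          (facSel (fun i => P.part i = 0) b r s * facSel (fun i => P.part i = 0) c t u)) •
          eta D ord (Fin.append b c) (Fin.append r t) (Fin.append s u) := by
  rw [D.star_eta, D.star_xiB_of_isTriB ord hb hc hbc, eta, smul_smul, smul_smul]
  congr 1
  have dvd₀ := facSel_mul_facSel_dvd_s6 (fun i => P.part i = 0) b r s c t u
  have dvd₁ := facSel_mul_facSel_dvd_s6 (fun i => P.part i = 1) b r s c t u
  rw [hb.facSel_true_eq_mul, hc.facSel_true_eq_mul, hbc.facSel_true_eq_mul, mul_mul_mul_comm,
    ← Nat.div_mul_div_comm dvd₀ dvd₁, mul_left_comm, Nat.mul_div_cancel' dvd₁]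

end StarProducts

theorem statement6_general {𝕜 A β : Type} [CommRing 𝕜] [Nontrivial 𝕜] [IsAddTorsionFree 𝕜]
    [NonUnitalRing A] [Module 𝕜 A]
    {n : ℕ} {T : ℕ → Type} [∀ e, NonUnitalRing (T e)] [∀ e, Module 𝕜 (T e)]
    (P : GoodPair 𝕜 A β) (D : Tower 𝕜 A β n T P) (ord : LinearOrder (A × Fin n × Fin n))
    (d e : ℕ) (b : Fin d → β) (r s : Fin d → Fin n) (c : Fin e → β) (t u : Fin e → Fin n)
    (hbrs : IsTriB P b r s) (hctu : IsTriB P c t u) :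
    (starIter D d (fun k => P.bas (b k)) r s
        = facSel (fun _ => True) b r s • xiB D ord b r s) ∧
    (IsTriB P (Fin.append b c) (Fin.append r t) (Fin.append s u) →
      (facSel (fun _ => True) b r s * facSel (fun _ => True) c t u
          ∣ facSel (fun _ => True) (Fin.append b c) (Fin.append r t) (Fin.append s u)) ∧
      D.star (xiB D ord b r s) (xiB D ord c t u)
        = (facSel (fun _ => True) (Fin.append b c) (Fin.append r t) (Fin.append s u) /
            (facSel (fun _ => True) b r s * facSel (fun _ => True) c t u)) •
            xiB D ord (Fin.append b c) (Fin.append r t) (Fin.append s u)) ∧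
    (¬ IsTriB P (Fin.append b c) (Fin.append r t) (Fin.append s u) →
      D.star (xiB D ord b r s) (xiB D ord c t u) = 0) ∧
    (IsTriB P (Fin.append b c) (Fin.append r t) (Fin.append s u) →
      (facSel (fun i => P.part i = 0) b r s * facSel (fun i => P.part i = 0) c t u
          ∣ facSel (fun i => P.part i = 0) (Fin.append b c) (Fin.append r t) (Fin.append s u)) ∧
      D.star (eta D ord b r s) (eta D ord c t u)
        = (facSel (fun i => P.part i = 0) (Fin.append b c) (Fin.append r t) (Fin.append s u) /
            (facSel (fun i => P.part i = 0) b r s * facSel (fun i => P.part i = 0) c t u)) •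
            eta D ord (Fin.append b c) (Fin.append r t) (Fin.append s u)) ∧
    (¬ IsTriB P (Fin.append b c) (Fin.append r t) (Fin.append s u) →
      D.star (eta D ord b r s) (eta D ord c t u) = 0) :=
  ⟨by rw [D.starIter_eq_symmetrize_X _ fun k => P.homog_bas (b k),
      D.symmetrize_X_of_isTriB ord hbrs],
    fun h => ⟨facSel_mul_facSel_dvd_s6 .., D.star_xiB_of_isTriB ord hbrs hctu h⟩,
    fun h => D.star_xiB_eq_zero ord hbrs hctu h,
    fun h => ⟨facSel_mul_facSel_dvd_s6 .., D.star_eta_of_isTriB ord hbrs hctu h⟩,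
    fun h => by rw [D.star_eta, D.star_xiB_eq_zero ord hbrs hctu h, smul_zero]⟩

/-- Let `(𝐛,𝐫,𝐬) ∈ Tri^B(n,d)`, `(𝐜,𝐭,𝐮) ∈ Tri^B(n,e)`.  Then
(i) `ξ^{b_1}_{r_1,s_1} * ⋯ * ξ^{b_d}_{r_d,s_d} = [𝐛,𝐫,𝐬]^! • ξ^𝐛_{𝐫,𝐬}`;
(ii) if the concatenation lies in `Tri^B(n,d+e)` then `[𝐛,𝐫,𝐬]^!·[𝐜,𝐭,𝐮]^!`
divides `[𝐛𝐜,𝐫𝐭,𝐬𝐮]^!` and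
`ξ^𝐛_{𝐫,𝐬} * ξ^𝐜_{𝐭,𝐮} = ([𝐛𝐜,𝐫𝐭,𝐬𝐮]^!/([𝐛,𝐫,𝐬]^![𝐜,𝐭,𝐮]^!)) • ξ^{𝐛𝐜}_{𝐫𝐭,𝐬𝐮}`,
otherwise the `*`-product is `0`; (iii) the same for the `η`'s with `[·]^!` replaced by
`[·]^!_𝔞`. -/
theorem statement6 {𝕜 A β : Type} [CommRing 𝕜] [IsDomain 𝕜] [CharZero 𝕜]
    [NonUnitalRing A] [Module 𝕜 A] [SMulCommClass 𝕜 A A] [IsScalarTower 𝕜 A A]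
    {n : ℕ} (hn : 0 < n) {T : ℕ → Type} [∀ e, NonUnitalRing (T e)] [∀ e, Module 𝕜 (T e)]
    (P : GoodPair 𝕜 A β) (D : Tower 𝕜 A β n T P) (ord : LinearOrder (A × Fin n × Fin n))
    (d e : ℕ) (b : Fin d → β) (r s : Fin d → Fin n) (c : Fin e → β) (t u : Fin e → Fin n)
    (hbrs : IsTriB P b r s) (hctu : IsTriB P c t u) :
    (starIter D d (fun k => P.bas (b k)) r s
        = facSel (fun _ => True) b r s • xiB D ord b r s) ∧
    (IsTriB P (Fin.append b c) (Fin.append r t) (Fin.append s u) →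
      (facSel (fun _ => True) b r s * facSel (fun _ => True) c t u
          ∣ facSel (fun _ => True) (Fin.append b c) (Fin.append r t) (Fin.append s u)) ∧
      D.star (xiB D ord b r s) (xiB D ord c t u)
        = (facSel (fun _ => True) (Fin.append b c) (Fin.append r t) (Fin.append s u) /
            (facSel (fun _ => True) b r s * facSel (fun _ => True) c t u)) •
            xiB D ord (Fin.append b c) (Fin.append r t) (Fin.append s u)) ∧
    (¬ IsTriB P (Fin.append b c) (Fin.append r t) (Fin.append s u) →
      D.star (xiB D ord b r s) (xiB D ord c t u) = 0) ∧
    (IsTriB P (Fin.append b c) (Fin.append r t) (Fin.append s u) →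
      (facSel (fun i => P.part i = 0) b r s * facSel (fun i => P.part i = 0) c t u
          ∣ facSel (fun i => P.part i = 0) (Fin.append b c) (Fin.append r t) (Fin.append s u)) ∧
      D.star (eta D ord b r s) (eta D ord c t u)
        = (facSel (fun i => P.part i = 0) (Fin.append b c) (Fin.append r t) (Fin.append s u) /
            (facSel (fun i => P.part i = 0) b r s * facSel (fun i => P.part i = 0) c t u)) •
            eta D ord (Fin.append b c) (Fin.append r t) (Fin.append s u)) ∧
    (¬ IsTriB P (Fin.append b c) (Fin.append r t) (Fin.append s u) →
      D.star (eta D ord b r s) (eta D ord c t u) = 0) :=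
  statement6_general P D ord d e b r s c t u hbrs hctu

end GS
end
end
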